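/- arXiv:math/0305242 — 5 statements merged into one kernel-verified Lean document; each statement's English description precedes it below -/
import Mathlib

section
/- Let (𝒜,𝒳) be a nontrivial (k,m)-net in the complex projective plane ℙ²(ℂ). Then k ≤ 5; moreover if k = 4 then m ≥ 3, and if k = 5 then m ≥ 6. -/
/-- The complex projective plane ℙ²(ℂ) = ℙ(ℂ³). -/
abbrev P2 : Type := Projectivization ℂ (Fin 3 → ℂ)

/-- A line in ℙ²(ℂ): the set of points annihilated by a nonzero linear form on ℂ³. -/
def IsProjLine (L : Set P2) : Prop :=
  ∃ f : (Fin 3 → ℂ) →ₗ[ℂ] ℂ, f ≠ 0 ∧ L = {p : P2 | f p.rep = 0}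

/-- A (k,m)-net in ℙ²(ℂ): a family of `k` pairwise disjoint classes of lines, each of
cardinality `m`, and a finite set `X` of points such that lines of distinct classes meet
in a point of `X` and through every point of `X` passes exactly one line of each class. -/
structure IsNet (k m : ℕ) (A : Fin k → Finset (Set P2)) (X : Set P2) : Prop where
  lines : ∀ i, ∀ L ∈ A i, IsProjLine L
  card_eq : ∀ i, (A i).card = m
  finiteX : X.Finite
  disj : ∀ i j, i ≠ j → Disjoint (A i) (A j)
  meets : ∀ i j, i ≠ j → ∀ L ∈ A i, ∀ L' ∈ A j, ∃ p ∈ X, p ∈ L ∧ p ∈ L'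
  unique_through : ∀ p ∈ X, ∀ i, ∃! L, L ∈ A i ∧ p ∈ L

/-!
Let `F` and `G` be the products of the lines of two classes. The vector field `∇F × ∇G` is tangent
to all curves of the pencil spanned by `F` and `G`; each line of the net divides a member of this
pencil, so it is invariant under the vector field `D` and divides its extactic polynomial
`det (D^i x_j)`, which is homogeneous of degree `6 * m - 6`. Hence `k * m ≤ 6 * m - 6`, provided
that the extactic polynomial does not vanish.

To see that it does not, choose coordinates in which `F = x₀ * H`. After division by `x₀`, the
extactic polynomial restricts to the line `x₀ = 0` as
`m ^ 3 * g ^ 2 * wronskian (h ^ 2) (wronskian h g)`, where `g` and `h` are the restrictions of `G`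
and `H`. If this were zero, then `g` would be a multiple of `h` by a linear polynomial; but `h`
vanishes at the intersection of `x₀ = 0` with another line of its class, and `g` does not, since
no line of another class passes through this point.
-/

open scoped Matrix

section Wronskian

open Polynomial

variable {K : Type*} [Field K] [CharZero K]

theorem exists_eq_C_mul_of_wronskian_eq_zero {p q : K[X]} (hq : q ≠ 0)
    (h : wronskian p q = 0) : ∃ a, p = C a * q := by
  obtain ⟨q', p', d, hrel, rfl, rfl⟩ :=
    UniqueFactorizationMonoid.exists_reduced_factors q hq p
  have hd : d ≠ 0 := left_ne_zero_of_mul hq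
  have hw : wronskian (d * p') (d * q') = d ^ 2 * wronskian p' q' := by
    simp only [wronskian, derivative_mul]
    ring
  have hw' : wronskian p' q' = 0 := by
    simpa [hd] using hw.symm.trans h
  obtain ⟨hp', hq'⟩ := hrel.isCoprime.symm.wronskian_eq_zero_iff.1 hw'
  obtain ⟨a, rfl⟩ := natDegree_eq_zero.1 (derivative_eq_zero.1 hp')
  obtain ⟨b, rfl⟩ := natDegree_eq_zero.1 (derivative_eq_zero.1 hq')
  have hb : b ≠ 0 := by simpa using right_ne_zero_of_mul hq
  refine ⟨a / b, ?_⟩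
  rw [mul_left_comm, ← C_mul, div_mul_cancel₀ a hb]

theorem exists_eq_linear_mul_of_wronskian_eq_zero {g h : K[X]} (hh : h ≠ 0)
    (hW : wronskian (h ^ 2) (wronskian h g) = 0) : ∃ a b, g = (C a * X + C b) * h := by
  obtain ⟨a, ha⟩ : ∃ a, wronskian h g = C a * h ^ 2 :=
    exists_eq_C_mul_of_wronskian_eq_zero (pow_ne_zero 2 hh)
      (by rw [← wronskian_neg_eq, hW, neg_zero])
  have hW' : wronskian (g - C a * X * h) h = 0 := by
    simp only [wronskian, derivative_sub, derivative_mul, derivative_C, derivative_X] at ha ⊢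
    linear_combination -ha
  obtain ⟨b, hb⟩ := exists_eq_C_mul_of_wronskian_eq_zero hh hW'
  exact ⟨a, b, by linear_combination hb⟩

end Wronskian

theorem dvd_derivation_apply_of_derivation_eq_zero {K A : Type*} [Field K] [CharZero K]
    [CommRing A] [IsDomain A] [WfDvdMonoid A] [Algebra K A] (D : Derivation K A A) {p P : A}
    (hp : Prime p) (hP : P ≠ 0) (hdvd : p ∣ P) (hD : D P = 0) : p ∣ D p := by
  obtain ⟨Q, hQ, hpQ⟩ := (FiniteMultiplicity.of_prime_left hp hP).exists_eq_pow_mul_and_not_dvd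
  obtain ⟨n, hn⟩ : ∃ n, multiplicity p P = n + 1 :=
    Nat.exists_eq_succ_of_ne_zero (multiplicity_ne_zero.2 hdvd)
  rw [hn] at hQ
  have key : p ^ n * (p * D Q + ((n + 1 : ℕ) : A) * Q * D p) = 0 := by
    rw [← hD, hQ, D.leibniz, D.leibniz_pow]
    simp only [smul_eq_mul, nsmul_eq_mul, Nat.add_sub_cancel]
    ring
  have hsum := (mul_eq_zero.1 key).resolve_left (pow_ne_zero n hp.ne_zero)
  have hmul : p ∣ ((n + 1 : ℕ) : A) * Q * D p :=
    ⟨-D Q, by linear_combination hsum⟩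
  have hunit : IsUnit ((n + 1 : ℕ) : A) := by
    simpa using (Nat.cast_ne_zero (R := K).2 n.succ_ne_zero).isUnit.map (algebraMap K A)
  rw [mul_assoc, hunit.dvd_mul_left] at hmul
  exact (hp.dvd_or_dvd hmul).resolve_left hpQ

theorem dvd_prod_sub_prod {R ι : Type*} [CommRing R] {d : R} (s : Finset ι) {f g : ι → R}
    (h : ∀ i ∈ s, d ∣ f i - g i) : d ∣ ∏ i ∈ s, f i - ∏ i ∈ s, g i := by
  simp only [← Ideal.mem_span_singleton, ← Ideal.Quotient.eq, map_prod] at h ⊢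
  exact Finset.prod_congr rfl h

open MvPolynomial

section LinearForm

variable {σ R K : Type*} [Fintype σ] [CommSemiring R] [Field K]

/-- The linear form with coefficient vector `c`, as a polynomial. -/
noncomputable def linearForm : (σ → R) →ₗ[R] MvPolynomial σ R :=
  Fintype.linearCombination R X

theorem linearForm_apply (c : σ → R) : linearForm c = ∑ i, C (c i) * X i := by
  simp [linearForm, Fintype.linearCombination_apply, smul_eq_C_mul]

theorem linearForm_single [DecidableEq σ] (i : σ) : linearForm (Pi.single i (1 : R)) = X i := by
  simp [linearForm]

theorem linearForm_injective : Function.Injective (linearForm : (σ → R) → MvPolynomial σ R) :=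
  (linearIndependent_X σ R).fintypeLinearCombination_injective

theorem isHomogeneous_linearForm (c : σ → R) : (linearForm c).IsHomogeneous 1 := by
  rw [linearForm_apply]
  exact .sum _ _ _ fun i _ ↦ isHomogeneous_C_mul_X _ _

theorem linearForm_ne_zero {c : σ → R} (hc : c ≠ 0) : linearForm c ≠ 0 :=
  (map_ne_zero_iff _ linearForm_injective).2 hc

theorem totalDegree_linearForm {c : σ → R} (hc : c ≠ 0) : (linearForm c).totalDegree = 1 :=
  (isHomogeneous_linearForm c).totalDegree (linearForm_ne_zero hc)

theorem prime_linearForm {c : σ → K} (hc : c ≠ 0) : Prime (linearForm c) := by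
  refine (irreducible_of_totalDegree_eq_one (totalDegree_linearForm hc) fun x hx ↦ ?_).prime
  rw [isUnit_iff_ne_zero]
  rintro rfl
  exact linearForm_ne_zero hc (MvPolynomial.ext _ _ fun i ↦ zero_dvd_iff.1 (hx i))

theorem exists_smul_eq_of_linearForm_dvd {c d : σ → K} (h : linearForm c ∣ linearForm d) :
    ∃ a : K, a • c = d := by
  rcases eq_or_ne d 0 with rfl | hd
  · exact ⟨0, zero_smul K c⟩
  obtain ⟨Q, hQ⟩ := h
  have hd' : linearForm c * Q ≠ 0 := hQ ▸ linearForm_ne_zero hd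
  have hc : c ≠ 0 := by
    rintro rfl
    simp at hd'
  have hdeg : (linearForm c).totalDegree + Q.totalDegree = 1 := by
    rw [← totalDegree_mul_of_isDomain (left_ne_zero_of_mul hd') (right_ne_zero_of_mul hd'), ← hQ,
      totalDegree_linearForm hd]
  rw [totalDegree_linearForm hc, Nat.add_eq_left] at hdeg
  obtain ⟨a, rfl⟩ : ∃ a, Q = C a := ⟨_, totalDegree_eq_zero_iff_eq_C.1 hdeg⟩
  exact ⟨a, linearForm_injective <| by rw [map_smul, hQ, smul_eq_C_mul, mul_comm]⟩

theorem isHomogeneous_prod_linearForm {ι : Type*} (s : Finset ι) (c : ι → σ → R) :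
    (∏ i ∈ s, linearForm (c i)).IsHomogeneous s.card := by
  simpa using IsHomogeneous.prod s _ (fun _ ↦ 1) fun i _ ↦ isHomogeneous_linearForm (c i)

theorem card_le_totalDegree_of_linearForm_dvd {ι : Type*} [Fintype ι] {c : ι → σ → K}
    {E : MvPolynomial σ K} (hE : E ≠ 0) (hc : ∀ i, c i ≠ 0)
    (hpair : Pairwise fun i j ↦ ¬ linearForm (c i) ∣ linearForm (c j))
    (hdvd : ∀ i, linearForm (c i) ∣ E) : Fintype.card ι ≤ E.totalDegree := by
  have hprod : ∏ i, linearForm (c i) ∣ E :=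
    Fintype.prod_dvd_of_isRelPrime
      (fun i j hij ↦ (prime_linearForm (hc i)).irreducible.isRelPrime_iff_not_dvd.2 (hpair hij))
      hdvd
  calc Fintype.card ι = (∏ i, linearForm (c i)).totalDegree :=
        ((isHomogeneous_prod_linearForm Finset.univ c).totalDegree
          (Finset.prod_ne_zero_iff.2 fun i _ ↦ linearForm_ne_zero (hc i))).symm
    _ ≤ E.totalDegree := totalDegree_le_of_dvd_of_isDomain hprod hE

end LinearForm

section Derivation

variable {σ R : Type*} [CommSemiring R]

theorem derivation_apply_eq_sum_pderiv [Fintype σ] {M : Type*} [AddCommMonoid M] [Module R M]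
    [Module (MvPolynomial σ R) M] [IsScalarTower R (MvPolynomial σ R) M]
    (D : Derivation R (MvPolynomial σ R) M) (P : MvPolynomial σ R) :
    D P = ∑ i, pderiv i P • D (X i) := by
  classical
  induction P using MvPolynomial.induction_on with
  | C a => simp [derivation_C]
  | add P Q hP hQ => simp [hP, hQ, add_smul, Finset.sum_add_distrib]
  | mul_X P j hP =>
    simp [hP, pderiv_X, Pi.single_apply, add_smul, Finset.sum_add_distrib, Finset.smul_sum,
      mul_smul]

theorem isHomogeneous_derivation_apply [Finite σ]
    {D : Derivation R (MvPolynomial σ R) (MvPolynomial σ R)} {e : ℕ}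
    (hD : ∀ i, (D (X i)).IsHomogeneous (e + 1)) {p : ℕ} {P : MvPolynomial σ R}
    (hP : P.IsHomogeneous (p + 1)) : (D P).IsHomogeneous (p + e + 1) := by
  cases nonempty_fintype σ
  rw [derivation_apply_eq_sum_pderiv]
  exact .sum _ _ _ fun i _ ↦ hP.pderiv.mul (hD i)

end Derivation

section Extactic

theorem isHomogeneous_det {σ n R : Type*} [Fintype n] [DecidableEq n] [CommRing R]
    {M : Matrix n n (MvPolynomial σ R)} {d : n → ℕ} (hM : ∀ i j, (M i j).IsHomogeneous (d i)) :
    M.det.IsHomogeneous (∑ i, d i) := by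
  rw [Matrix.det_apply']
  refine .sum _ _ _ fun τ _ ↦ ?_
  rw [← Equiv.sum_comp τ d, ← map_intCast (C (σ := σ) (R := R))]
  exact (IsHomogeneous.prod _ _ _ fun i _ ↦ hM (τ i) i).C_mul _

variable {R K : Type*} [CommRing R] [Field K] {n : ℕ}

/-- The extactic polynomial of a polynomial vector field `D` with respect to linear forms: it
vanishes on every hyperplane through the origin that is invariant under `D`. -/
noncomputable def extactic (D : Derivation R (MvPolynomial (Fin n) R) (MvPolynomial (Fin n) R)) :
    MvPolynomial (Fin n) R :=
  (Matrix.of fun i j : Fin n ↦ D^[i] (X j)).det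

theorem isHomogeneous_extactic
    {D : Derivation R (MvPolynomial (Fin n) R) (MvPolynomial (Fin n) R)} {e : ℕ}
    (hD : ∀ i, (D (X i)).IsHomogeneous (e + 1)) :
    (extactic D).IsHomogeneous (∑ i : Fin n, (i * e + 1)) := by
  refine isHomogeneous_det fun i j ↦ ?_
  rw [Matrix.of_apply]
  induction (i : ℕ) with
  | zero => simpa using isHomogeneous_X R j
  | succ k ih =>
    rw [Function.iterate_succ_apply', add_one_mul]
    exact isHomogeneous_derivation_apply hD ih

theorem linearForm_dvd_extactic
    {D : Derivation K (MvPolynomial (Fin n) K) (MvPolynomial (Fin n) K)} {c : Fin n → K}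
    (hc : c ≠ 0) (h : linearForm c ∣ D (linearForm c)) : linearForm c ∣ extactic D := by
  obtain ⟨j, hj⟩ := Function.ne_iff.1 hc
  have hdvd (i : ℕ) : linearForm c ∣ D^[i] (linearForm c) := by
    induction i with
    | zero => rfl
    | succ i ih =>
      obtain ⟨Q, hQ⟩ := ih
      rw [Function.iterate_succ_apply', hQ, D.leibniz, smul_eq_mul, smul_eq_mul]
      exact dvd_add (dvd_mul_right _ _) (h.mul_left Q)
  set M : Matrix (Fin n) (Fin n) (MvPolynomial (Fin n) K) := .of fun i j ↦ D^[i] (X j)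
  have hM : M *ᵥ (C ∘ c) = fun i : Fin n ↦ D^[i] (linearForm c) := by
    funext i
    have hpow (P : MvPolynomial (Fin n) K) : D^[i] P = (D.toLinearMap ^ (i : ℕ)) P :=
      (Module.End.pow_apply _ _ _).symm
    simp only [hpow, linearForm, Fintype.linearCombination_apply, map_sum, map_smul]
    simp [M, Matrix.mulVec, dotProduct, hpow, smul_eq_C_mul, mul_comm]
  have hdet : M.det * C (c j) = ∑ i, M.adjugate j i * D^[i] (linearForm c) := by
    calc
      M.det * C (c j) = (M.adjugate *ᵥ M *ᵥ (C ∘ c)) j := by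
        simp [Matrix.mulVec_mulVec, Matrix.adjugate_mul, Matrix.smul_mulVec]
      _ = ∑ i, M.adjugate j i * D^[i] (linearForm c) := by rw [hM]; rfl
  have hunit : IsUnit (C (c j) : MvPolynomial (Fin n) K) := (isUnit_iff_ne_zero.2 hj).map C
  rw [extactic, ← hunit.dvd_mul_right, hdet]
  exact Finset.dvd_sum fun i _ ↦ (hdvd i).mul_left _

end Extactic

section JacobianDerivation

variable {R : Type*} [CommRing R]

/-- The gradient of a polynomial, as a vector of polynomials. -/
noncomputable def formalGradient {σ : Type*} (P : MvPolynomial σ R) : σ → MvPolynomial σ R :=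
  fun i ↦ pderiv i P

/-- The vector field `∇F × ∇G` tangent to the curves of the pencil spanned by `F` and `G`, viewed
as a derivation. -/
noncomputable def jacobianDerivation (F G : MvPolynomial (Fin 3) R) :
    Derivation R (MvPolynomial (Fin 3) R) (MvPolynomial (Fin 3) R) :=
  mkDerivation R (formalGradient F ⨯₃ formalGradient G)

variable (F G : MvPolynomial (Fin 3) R)

theorem jacobianDerivation_X (i : Fin 3) :
    jacobianDerivation F G (X i) = (formalGradient F ⨯₃ formalGradient G) i :=
  mkDerivation_X R _ i

theorem jacobianDerivation_apply (P : MvPolynomial (Fin 3) R) :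
    jacobianDerivation F G P = formalGradient P ⬝ᵥ formalGradient F ⨯₃ formalGradient G := by
  rw [derivation_apply_eq_sum_pderiv]
  simp only [jacobianDerivation_X, smul_eq_mul]
  rfl

theorem jacobianDerivation_apply_left : jacobianDerivation F G F = 0 := by
  rw [jacobianDerivation_apply, dot_self_cross]

theorem jacobianDerivation_apply_right : jacobianDerivation F G G = 0 := by
  rw [jacobianDerivation_apply, dot_cross_self]

variable {F G} {p q : ℕ}

theorem isHomogeneous_jacobianDerivation_X (hF : F.IsHomogeneous (p + 1))
    (hG : G.IsHomogeneous (q + 1)) (i : Fin 3) :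
    (jacobianDerivation F G (X i)).IsHomogeneous (p + q) := by
  have hmul (j k : Fin 3) : (pderiv j F * pderiv k G).IsHomogeneous (p + q) :=
    hF.pderiv.mul hG.pderiv
  rw [jacobianDerivation_X, cross_apply]
  fin_cases i <;> exact (hmul _ _).sub (hmul _ _)

theorem isHomogeneous_extactic_jacobianDerivation (hF : F.IsHomogeneous (p + 2))
    (hG : G.IsHomogeneous (p + 2)) :
    (extactic (jacobianDerivation F G)).IsHomogeneous (6 * (p + 1)) := by
  have hX (i : Fin 3) : (jacobianDerivation F G (X i)).IsHomogeneous (2 * p + 1 + 1) := by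
    convert isHomogeneous_jacobianDerivation_X hF hG i using 1
    ring
  convert isHomogeneous_extactic hX using 1
  simp only [Fin.sum_univ_three, Fin.val_zero, Fin.val_one, Fin.val_two]
  ring

end JacobianDerivation

section RestrictToLine

variable {R : Type*} [CommRing R]

/-- Restriction of polynomials to the line `X 0 = 0`, in the affine chart `X 1 = 1`. -/
noncomputable def restrictToLine : MvPolynomial (Fin 3) R →ₐ[R] Polynomial R :=
  aeval ![0, 1, Polynomial.X]

@[simp]
theorem restrictToLine_X_zero : restrictToLine (X 0 : MvPolynomial (Fin 3) R) = 0 := by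
  simp [restrictToLine]

@[simp]
theorem restrictToLine_X_one : restrictToLine (X 1 : MvPolynomial (Fin 3) R) = 1 := by
  simp [restrictToLine]

@[simp]
theorem restrictToLine_X_two :
    restrictToLine (X 2 : MvPolynomial (Fin 3) R) = Polynomial.X := by
  simp [restrictToLine]

theorem restrictToLine_linearForm (c : Fin 3 → R) :
    restrictToLine (linearForm c) = Polynomial.C (c 1) + Polynomial.C (c 2) * Polynomial.X := by
  simp [restrictToLine, linearForm_apply, Fin.sum_univ_three, Polynomial.algebraMap_eq]

theorem restrictToLine_linearForm_ne_zero {c : Fin 3 → R} (hc : Pi.single 0 1 ⨯₃ c ≠ 0) :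
    restrictToLine (linearForm c) ≠ 0 := by
  contrapose! hc
  rw [restrictToLine_linearForm] at hc
  have h₁ : c 1 = 0 := by simpa using congrArg (Polynomial.coeff · 0) hc
  have h₂ : c 2 = 0 := by simpa using congrArg (Polynomial.coeff · 1) hc
  simp [cross_apply, h₁, h₂]

theorem restrictToLine_pderiv_two (P : MvPolynomial (Fin 3) R) :
    restrictToLine (pderiv 2 P) = (restrictToLine P).derivative := by
  induction P using MvPolynomial.induction_on with
  | C a => simp [restrictToLine]
  | add P Q hP hQ => simp [hP, hQ]
  | mul_X P i hP =>
    rw [Derivation.leibniz, map_add, smul_eq_mul, smul_eq_mul, map_mul, map_mul, hP, map_mul,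
      Polynomial.derivative_mul]
    fin_cases i <;> simp [restrictToLine, pderiv_X, add_comm, mul_comm]

theorem restrictToLine_pderiv_one {P : MvPolynomial (Fin 3) R} {p : ℕ} (hP : P.IsHomogeneous p) :
    restrictToLine (pderiv 1 P) =
      (p : Polynomial R) * restrictToLine P - Polynomial.X * (restrictToLine P).derivative := by
  have euler := congrArg restrictToLine hP.sum_X_mul_pderiv
  simp only [Fin.sum_univ_three, map_add, map_mul, nsmul_eq_mul, map_natCast,
    restrictToLine_pderiv_two, restrictToLine_X_zero, restrictToLine_X_one,
    restrictToLine_X_two] at euler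
  linear_combination euler

variable {G H P : MvPolynomial (Fin 3) R} {d p q : ℕ}

theorem jacobianDerivation_X_zero_mul_apply_X_zero :
    jacobianDerivation (X 0 * H) G (X 0) = X 0 * jacobianDerivation H G (X 0) := by
  simp only [jacobianDerivation_X, cross_apply, formalGradient, Derivation.leibniz, smul_eq_mul,
    Matrix.cons_val_zero, pderiv_X_of_ne (R := R) (show (0 : Fin 3) ≠ 1 by decide),
    pderiv_X_of_ne (R := R) (show (0 : Fin 3) ≠ 2 by decide)]
  ring

theorem restrictToLine_jacobianDerivation_X_zero (hH : H.IsHomogeneous d)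
    (hG : G.IsHomogeneous q) :
    restrictToLine (jacobianDerivation H G (X 0)) =
      d * restrictToLine H * (restrictToLine G).derivative -
        q * (restrictToLine H).derivative * restrictToLine G := by
  simp only [jacobianDerivation_X, cross_apply, formalGradient, Matrix.cons_val_zero, map_sub,
    map_mul, restrictToLine_pderiv_one hH, restrictToLine_pderiv_one hG, restrictToLine_pderiv_two]
  ring

theorem restrictToLine_jacobianDerivation_X_zero_mul (hG : G.IsHomogeneous q)
    (hP : P.IsHomogeneous p) :
    restrictToLine (jacobianDerivation (X 0 * H) G P) =
      restrictToLine H * (q * restrictToLine G * (restrictToLine P).derivative -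
        p * (restrictToLine G).derivative * restrictToLine P) := by
  have hX₀ : restrictToLine (pderiv 0 (X 0 * H)) = restrictToLine H := by
    simp
  have hX₁ : restrictToLine (pderiv 1 (X 0 * H)) = 0 := by
    simp [pderiv_X]
  have hX₂ : restrictToLine (pderiv 2 (X 0 * H)) = 0 := by
    simp [pderiv_X]
  simp only [jacobianDerivation_apply, cross_apply, formalGradient, Matrix.vec3_dotProduct,
    Matrix.cons_val_zero, Matrix.cons_val_one, Matrix.cons_val, map_add, map_sub, map_mul, hX₀,
    hX₁, hX₂, restrictToLine_pderiv_one hP, restrictToLine_pderiv_one hG, restrictToLine_pderiv_two]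
  ring

/-- The quotient by `X 0` of the extactic polynomial of a derivation `D` that maps `X 0` to
`X 0 * S`. -/
noncomputable def reducedExtactic (D : Derivation R (MvPolynomial (Fin 3) R)
    (MvPolynomial (Fin 3) R)) (S : MvPolynomial (Fin 3) R) : MvPolynomial (Fin 3) R :=
  Matrix.det !![1, X 1, X 2; S, D (X 1), D (X 2); S ^ 2 + D S, D (D (X 1)), D (D (X 2))]

theorem extactic_eq_X_zero_mul_reducedExtactic {S : MvPolynomial (Fin 3) R}
    {D : Derivation R (MvPolynomial (Fin 3) R) (MvPolynomial (Fin 3) R)}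
    (h : D (X 0) = X 0 * S) : extactic D = X 0 * reducedExtactic D S := by
  simp only [extactic, reducedExtactic, Matrix.det_fin_three, Matrix.of_apply, Fin.val_zero,
    Fin.val_one, Fin.val_two, Function.iterate_succ, Function.iterate_zero, Function.comp_apply,
    id_eq, h, Derivation.leibniz, smul_eq_mul, Matrix.cons_val_zero, Matrix.cons_val_one,
    Matrix.cons_val]
  ring

theorem restrictToLine_reducedExtactic (hH : H.IsHomogeneous (d + 1))
    (hG : G.IsHomogeneous (d + 2)) :
    restrictToLine
        (reducedExtactic (jacobianDerivation (X 0 * H) G) (jacobianDerivation H G (X 0))) =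
      ((d + 2 : ℕ) : Polynomial R) ^ 3 * restrictToLine G ^ 2 *
        Polynomial.wronskian (restrictToLine H ^ 2)
          (Polynomial.wronskian (restrictToLine H) (restrictToLine G)) := by
  have hF : (X 0 * H).IsHomogeneous (d + 2) := by
    convert (isHomogeneous_X R (0 : Fin 3)).mul hH using 1
    ring
  have hS := isHomogeneous_jacobianDerivation_X hH hG 0
  have hD (i : Fin 3) := isHomogeneous_jacobianDerivation_X hF hG i
  simp only [reducedExtactic, Matrix.det_fin_three, Matrix.of_apply, Matrix.cons_val_zero,
    Matrix.cons_val_one, Matrix.cons_val, map_add, map_sub, map_mul, map_pow, map_one,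
    restrictToLine_jacobianDerivation_X_zero_mul hG (hD _),
    restrictToLine_jacobianDerivation_X_zero_mul hG hS,
    restrictToLine_jacobianDerivation_X_zero_mul hG (isHomogeneous_X R _),
    restrictToLine_jacobianDerivation_X_zero hH hG, restrictToLine_X_one, restrictToLine_X_two,
    Polynomial.wronskian, Polynomial.derivative_sq]
  simp only [Polynomial.derivative_one, Polynomial.derivative_X, Polynomial.derivative_mul,
    Polynomial.derivative_sub, Polynomial.derivative_natCast, Polynomial.derivative_zero,
    Polynomial.C_ofNat]
  push_cast
  ring

end RestrictToLine

theorem extactic_jacobianDerivation_ne_zero {K : Type*} [Field K] [CharZero K]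
    {G H : MvPolynomial (Fin 3) K} {d : ℕ} (hH : H.IsHomogeneous (d + 1))
    (hG : G.IsHomogeneous (d + 2)) (hH0 : restrictToLine H ≠ 0)
    (hHeval : (restrictToLine H).eval 0 = 0) (hGeval : (restrictToLine G).eval 0 ≠ 0) :
    extactic (jacobianDerivation (X 0 * H) G) ≠ 0 := by
  have hG0 : restrictToLine G ≠ 0 := by
    intro h
    simp [h] at hGeval
  rw [extactic_eq_X_zero_mul_reducedExtactic jacobianDerivation_X_zero_mul_apply_X_zero]
  refine mul_ne_zero (X_ne_zero 0) fun h ↦ ?_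
  have hW := congrArg restrictToLine h
  rw [restrictToLine_reducedExtactic hH hG, map_zero] at hW
  have hd : ((d + 2 : ℕ) : Polynomial K) ≠ 0 := Nat.cast_ne_zero.2 (by simp)
  obtain ⟨a, b, hab⟩ := exists_eq_linear_mul_of_wronskian_eq_zero hH0 <|
    (mul_eq_zero.1 hW).resolve_left (mul_ne_zero (pow_ne_zero 3 hd) (pow_ne_zero 2 hG0))
  exact hGeval (by rw [hab, Polynomial.eval_mul, hHeval, mul_zero])

section CrossProduct

variable {R K : Type*} [CommRing R] [Field K] {u v w x : Fin 3 → K}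

theorem exists_smul_eq_of_crossProduct_eq_zero (hv : v ≠ 0) (h : v ⨯₃ w = 0) :
    ∃ a : K, a • v = w := by
  contrapose! h
  exact crossProduct_ne_zero_iff_linearIndependent.2 ((LinearIndependent.pair_iff' hv).2 h)

theorem crossProduct_ne_zero_comm {v w : Fin 3 → R} : v ⨯₃ w ≠ 0 ↔ w ⨯₃ v ≠ 0 := by
  rw [← cross_anticomm, neg_ne_zero]

theorem exists_eq_smul_add_smul_of_triple_product_eq_zero (h : v ⨯₃ w ≠ 0)
    (hu : u ⬝ᵥ v ⨯₃ w = 0) : ∃ a b : K, a • v + b • w = u := by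
  have hli : ¬ LinearIndependent K ![u, v, w] := by
    change ¬ LinearIndependent K (Matrix.of ![u, v, w]).row
    rw [Matrix.linearIndependent_rows_iff_isUnit, Matrix.isUnit_iff_isUnit_det, isUnit_iff_ne_zero,
      not_not]
    exact (triple_product_eq_det u v w).symm.trans hu
  rw [Matrix.vecCons, linearIndependent_finCons, not_and_not_right] at hli
  have hmem := hli (crossProduct_ne_zero_iff_linearIndependent.1 h)
  rwa [Matrix.range_cons_cons_empty, Submodule.mem_span_pair] at hmem

theorem exists_smul_crossProduct_eq (h : v ⨯₃ w ≠ 0) (hv : v ⬝ᵥ x = 0) (hw : w ⬝ᵥ x = 0) :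
    ∃ a : K, a • (v ⨯₃ w) = x :=
  exists_smul_eq_of_crossProduct_eq_zero h <| by
    simp [cross_cross_eq_smul_sub_smul, hv, hw]

theorem dotProduct_crossProduct_eq_zero_iff (h : v ⨯₃ w ≠ 0) (hx : x ≠ 0) (hv : v ⬝ᵥ x = 0)
    (hw : w ⬝ᵥ x = 0) : u ⬝ᵥ v ⨯₃ w = 0 ↔ u ⬝ᵥ x = 0 := by
  obtain ⟨a, rfl⟩ := exists_smul_crossProduct_eq h hv hw
  simp [left_ne_zero_of_smul hx]

theorem dotProduct_eq_zero_iff_of_crossProduct_eq_zero (hv : v ≠ 0) (hw : w ≠ 0)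
    (h : v ⨯₃ w = 0) : v ⬝ᵥ x = 0 ↔ w ⬝ᵥ x = 0 := by
  obtain ⟨a, rfl⟩ := exists_smul_eq_of_crossProduct_eq_zero hv h
  simp [left_ne_zero_of_smul hw]

theorem exists_triple_product_ne_zero {v w : Fin 3 → R} (h : v ⨯₃ w ≠ 0) :
    ∃ u, u ⬝ᵥ v ⨯₃ w ≠ 0 := by
  contrapose! h
  exact dotProduct_eq_zero _ fun u ↦ by rw [dotProduct_comm, h]

theorem triple_product_vecMul (M : Matrix (Fin 3) (Fin 3) R) (u v w : Fin 3 → R) :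
    (u ᵥ* M) ⬝ᵥ (v ᵥ* M) ⨯₃ (w ᵥ* M) = M.det * (u ⬝ᵥ v ⨯₃ w) := by
  have hdet (u v w : Fin 3 → R) : u ⬝ᵥ v ⨯₃ w = (Matrix.of ![u, v, w]).det :=
    triple_product_eq_det u v w
  rw [hdet, hdet, mul_comm, ← Matrix.det_mul]
  congr 1
  ext i j
  fin_cases i <;> rfl

theorem crossProduct_vecMul_ne_zero {M : Matrix (Fin 3) (Fin 3) K} (hM : M.det ≠ 0)
    (h : v ⨯₃ w ≠ 0) : (v ᵥ* M) ⨯₃ (w ᵥ* M) ≠ 0 := by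
  obtain ⟨u, hu⟩ := exists_triple_product_ne_zero h
  have hne := mul_ne_zero hM hu
  rw [← triple_product_vecMul] at hne
  exact fun h0 ↦ hne (by rw [h0, dotProduct_zero])

theorem exists_vecMul_eq_single (h : u ⨯₃ w ≠ 0) : ∃ M : Matrix (Fin 3) (Fin 3) K,
    M.det ≠ 0 ∧ u ᵥ* M = Pi.single 0 1 ∧ w ᵥ* M = Pi.single 2 1 := by
  obtain ⟨v, hv⟩ := exists_triple_product_ne_zero (crossProduct_ne_zero_comm.1 h)
  set N : Matrix (Fin 3) (Fin 3) K := .of ![u, v, w]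
  have hN : IsUnit N.det := by
    rw [isUnit_iff_ne_zero]
    rwa [← triple_product_permutation, triple_product_eq_det] at hv
  have hrow (i : Fin 3) : N.row i ᵥ* N⁻¹ = Pi.single i 1 := by
    rw [← Matrix.single_one_vecMul, Matrix.vecMul_vecMul, Matrix.mul_nonsing_inv _ hN,
      Matrix.vecMul_one]
  exact ⟨N⁻¹, (Matrix.isUnit_nonsing_inv_det N hN).ne_zero, hrow 0, hrow 2⟩

end CrossProduct

/-- A net of lines in the projective plane over `K`, given by coefficient vectors: `c i a` is the
`a`-th line of the `i`-th class. The points of the net are the intersections `c i a ⨯₃ c j b` of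
lines of distinct classes. -/
structure IsLineNet {K ι κ : Type*} [Field K] (c : ι → κ → Fin 3 → K) : Prop where
  crossProduct_ne_zero : ∀ i a j b, (i, a) ≠ (j, b) → c i a ⨯₃ c j b ≠ 0
  existsUnique : ∀ i j, i ≠ j → ∀ a b l, ∃! d, c l d ⬝ᵥ c i a ⨯₃ c j b = 0

/-- The product of the linear forms of the lines in a class of a net. -/
noncomputable def classPolynomial {K ι κ : Type*} [Field K] [Fintype κ] (c : ι → κ → Fin 3 → K)
    (i : ι) : MvPolynomial (Fin 3) K :=
  ∏ a, linearForm (c i a)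

theorem isHomogeneous_classPolynomial {K ι κ : Type*} [Field K] [Fintype κ]
    (c : ι → κ → Fin 3 → K) (i : ι) : (classPolynomial c i).IsHomogeneous (Fintype.card κ) :=
  isHomogeneous_prod_linearForm Finset.univ (c i)

namespace IsLineNet

variable {K ι κ : Type*} [Field K] {c : ι → κ → Fin 3 → K}

theorem vecMul (hc : IsLineNet c) {M : Matrix (Fin 3) (Fin 3) K} (hM : M.det ≠ 0) :
    IsLineNet fun i a ↦ c i a ᵥ* M where
  crossProduct_ne_zero i a j b h :=
    crossProduct_vecMul_ne_zero hM (hc.crossProduct_ne_zero i a j b h)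
  existsUnique i j hij a b l := by
    simpa [triple_product_vecMul, hM] using hc.existsUnique i j hij a b l

theorem not_linearForm_dvd (hc : IsLineNet c) {i j : ι} {a b : κ} (h : (i, a) ≠ (j, b)) :
    ¬ linearForm (c i a) ∣ linearForm (c j b) := by
  intro hdvd
  obtain ⟨t, ht⟩ := exists_smul_eq_of_linearForm_dvd hdvd
  exact hc.crossProduct_ne_zero i a j b h (by rw [← ht, map_smul, cross_self, smul_zero])

theorem ne_zero [Nontrivial κ] (hc : IsLineNet c) (i : ι) (a : κ) : c i a ≠ 0 := by
  obtain ⟨b, hb⟩ := exists_ne a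
  intro h
  exact hc.crossProduct_ne_zero i a i b (by simpa using hb.symm) (by rw [h, map_zero]; rfl)

theorem exists_perm_triple_product_eq_zero [Finite κ] (hc : IsLineNet c) {i j l : ι} (hli : l ≠ i)
    (hlj : l ≠ j) (e : κ) : ∃ s : Equiv.Perm κ, ∀ a, c i a ⬝ᵥ c j (s a) ⨯₃ c l e = 0 := by
  choose s hs using fun a ↦ (hc.existsUnique l i hli e a j).exists
  have hconc (a : κ) : c i a ⬝ᵥ c j (s a) ⨯₃ c l e = 0 :=
    (triple_product_permutation _ _ _).trans (hs a)
  have hinj : Function.Injective s := fun a a' h ↦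
    (hc.existsUnique j l hlj.symm (s a) e i).unique (hconc a) (h ▸ hconc a')
  exact ⟨.ofBijective s (Finite.injective_iff_bijective.1 hinj), hconc⟩

variable [Fintype κ]

theorem not_dvd_classPolynomial [Nontrivial κ] (hc : IsLineNet c) {i j : ι} (hij : i ≠ j) (b : κ) :
    ¬ linearForm (c j b) ∣ classPolynomial c i := by
  rw [classPolynomial, (prime_linearForm (hc.ne_zero j b)).dvd_finsetProd_iff]
  rintro ⟨a, -, ha⟩
  exact hc.not_linearForm_dvd (by simp [hij.symm]) ha

theorem exists_linearForm_dvd_sub (hc : IsLineNet c) {i j l : ι} (hli : l ≠ i) (hlj : l ≠ j)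
    (e : κ) : ∃ t : K, linearForm (c l e) ∣ classPolynomial c i - C t * classPolynomial c j := by
  obtain ⟨s, hs⟩ := hc.exists_perm_triple_product_eq_zero hli hlj e
  choose t r htr using fun a ↦ exists_eq_smul_add_smul_of_triple_product_eq_zero
    (hc.crossProduct_ne_zero j (s a) l e (by simp [hlj.symm])) (hs a)
  refine ⟨∏ a, t a, ?_⟩
  have hprod : C (∏ a, t a) * classPolynomial c j = ∏ a, C (t a) * linearForm (c j (s a)) := by
    rw [Finset.prod_mul_distrib, map_prod, classPolynomial,
      Equiv.prod_comp s fun b ↦ linearForm (c j b)]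
  rw [hprod]
  refine dvd_prod_sub_prod _ fun a _ ↦ ⟨C (r a), ?_⟩
  rw [← htr a, map_add, map_smul, map_smul, smul_eq_C_mul, smul_eq_C_mul]
  ring

variable [Nontrivial κ]

theorem classPolynomial_sub_ne_zero (hc : IsLineNet c) {i j : ι} (hij : i ≠ j) (t : K) :
    classPolynomial c i - C t * classPolynomial c j ≠ 0 := by
  obtain ⟨b⟩ := Nontrivial.to_nonempty (α := κ)
  intro h
  refine hc.not_dvd_classPolynomial hij b ?_
  rw [sub_eq_zero.1 h]
  exact (Finset.dvd_prod_of_mem _ (Finset.mem_univ b)).mul_left _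

theorem classPolynomial_ne_zero (hc : IsLineNet c) (i : ι) : classPolynomial c i ≠ 0 :=
  Finset.prod_ne_zero_iff.2 fun a _ ↦ linearForm_ne_zero (hc.ne_zero i a)

theorem linearForm_dvd_jacobianDerivation [CharZero K] (hc : IsLineNet c) {i j : ι} (hij : i ≠ j)
    (l : ι) (e : κ) : linearForm (c l e) ∣
      jacobianDerivation (classPolynomial c i) (classPolynomial c j) (linearForm (c l e)) := by
  have hprime := prime_linearForm (hc.ne_zero l e)
  have hdvd : linearForm (c l e) ∣ classPolynomial c l :=
    Finset.dvd_prod_of_mem _ (Finset.mem_univ e)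
  by_cases hli : l = i
  · subst hli
    exact dvd_derivation_apply_of_derivation_eq_zero _ hprime (hc.classPolynomial_ne_zero l) hdvd
      (jacobianDerivation_apply_left _ _)
  by_cases hlj : l = j
  · subst hlj
    exact dvd_derivation_apply_of_derivation_eq_zero _ hprime (hc.classPolynomial_ne_zero l) hdvd
      (jacobianDerivation_apply_right _ _)
  obtain ⟨t, ht⟩ := hc.exists_linearForm_dvd_sub hli hlj e
  refine dvd_derivation_apply_of_derivation_eq_zero _ hprime
    (hc.classPolynomial_sub_ne_zero hij t) ht ?_
  simp [← smul_eq_C_mul, jacobianDerivation_apply_left, jacobianDerivation_apply_right]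

theorem card_mul_card_le_of_extactic_ne_zero [CharZero K] [Fintype ι] (hc : IsLineNet c) {i j : ι}
    (hij : i ≠ j)
    (hE : extactic (jacobianDerivation (classPolynomial c i) (classPolynomial c j)) ≠ 0) :
    Fintype.card ι * Fintype.card κ ≤ 6 * (Fintype.card κ - 1) := by
  obtain ⟨d, hd⟩ := Nat.exists_eq_add_of_le' (Fintype.one_lt_card (α := κ))
  have hhom (l : ι) : (classPolynomial c l).IsHomogeneous (d + 2) :=
    hd ▸ isHomogeneous_classPolynomial c l
  calc
    Fintype.card ι * Fintype.card κ = Fintype.card (ι × κ) := (Fintype.card_prod ι κ).symm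
    _ ≤ (extactic (jacobianDerivation (classPolynomial c i) (classPolynomial c j))).totalDegree :=
      card_le_totalDegree_of_linearForm_dvd (c := fun p : ι × κ ↦ c p.1 p.2) hE
        (fun p ↦ hc.ne_zero p.1 p.2) (fun _ _ hpq ↦ hc.not_linearForm_dvd hpq)
        fun p ↦ linearForm_dvd_extactic (hc.ne_zero p.1 p.2)
          (hc.linearForm_dvd_jacobianDerivation hij p.1 p.2)
    _ = 6 * (Fintype.card κ - 1) := by
      rw [(isHomogeneous_extactic_jacobianDerivation (hhom i) (hhom j)).totalDegree hE, hd]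
      rfl

theorem extactic_ne_zero_of_eq_single [CharZero K] (hc : IsLineNet c) {i j : ι} {a b : κ}
    (hij : i ≠ j) (ha : c i a = Pi.single 0 1) (hb : c i b = Pi.single 2 1) :
    extactic (jacobianDerivation (classPolynomial c i) (classPolynomial c j)) ≠ 0 := by
  classical
  obtain ⟨d, hd⟩ := Nat.exists_eq_add_of_le' (Fintype.one_lt_card (α := κ))
  set H := ∏ a' ∈ Finset.univ.erase a, linearForm (c i a') with hHdef
  have hF : classPolynomial c i = X 0 * H := by
    rw [classPolynomial, ← Finset.mul_prod_erase _ _ (Finset.mem_univ a), ha, linearForm_single]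
  have hab : a ≠ b := by
    rintro rfl
    simpa using congrFun (ha.symm.trans hb) 0
  rw [hF]
  apply extactic_jacobianDerivation_ne_zero (d := d)
  · simpa [hd] using isHomogeneous_prod_linearForm (Finset.univ.erase a) (c i)
  · exact hd ▸ isHomogeneous_classPolynomial c j
  · rw [hHdef, map_prod, Finset.prod_ne_zero_iff]
    intro a' ha'
    rw [Finset.mem_erase] at ha'
    refine restrictToLine_linearForm_ne_zero ?_
    rw [← ha]
    exact hc.crossProduct_ne_zero i a i a' (by simpa using ha'.1.symm)
  · rw [hHdef, map_prod, Polynomial.eval_prod]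
    refine Finset.prod_eq_zero (Finset.mem_erase.2 ⟨hab.symm, Finset.mem_univ b⟩) ?_
    simp [hb, linearForm_single]
  · rw [classPolynomial, map_prod, Polynomial.eval_prod, Finset.prod_ne_zero_iff]
    intro b' _ h
    refine hab ((hc.existsUnique i j hij a b' i).unique (dot_self_cross _ _) ?_)
    simpa [ha, hb, restrictToLine_linearForm, cross_apply] using h

theorem card_mul_card_le [CharZero K] [Fintype ι] [Nontrivial ι] (hc : IsLineNet c) :
    Fintype.card ι * Fintype.card κ ≤ 6 * (Fintype.card κ - 1) := by
  obtain ⟨i, j, hij⟩ := exists_pair_ne ι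
  obtain ⟨a, b, hab⟩ := exists_pair_ne κ
  obtain ⟨M, hM, ha, hb⟩ :=
    exists_vecMul_eq_single (hc.crossProduct_ne_zero i a i b (by simpa using hab))
  exact (hc.vecMul hM).card_mul_card_le_of_extactic_ne_zero hij
    ((hc.vecMul hM).extactic_ne_zero_of_eq_single hij ha hb)

end IsLineNet

theorem net_k_le_five_general {K ι κ : Type*} [Field K] [CharZero K] [Fintype ι] [Fintype κ]
    [Nontrivial κ] {c : ι → κ → Fin 3 → K} (hc : IsLineNet c) :
    Fintype.card ι ≤ 5 ∧ (Fintype.card ι = 4 → 3 ≤ Fintype.card κ) ∧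
      (Fintype.card ι = 5 → 6 ≤ Fintype.card κ) := by
  have hκ : 1 < Fintype.card κ := Fintype.one_lt_card
  rcases subsingleton_or_nontrivial ι with hι | hι
  · have := Fintype.card_le_one_iff_subsingleton.2 hι
    omega
  have hbound := hc.card_mul_card_le
  refine ⟨?_, fun h ↦ ?_, fun h ↦ ?_⟩
  · by_contra! h
    have : 6 * Fintype.card κ ≤ Fintype.card ι * Fintype.card κ := Nat.mul_le_mul_right _ h
    omega
  all_goals
    rw [h] at hbound
    omega

theorem IsProjLine.exists_dotProduct {L : Set P2} (hL : IsProjLine L) :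
    ∃ v : Fin 3 → ℂ, v ≠ 0 ∧ ∀ p : P2, p ∈ L ↔ v ⬝ᵥ p.rep = 0 := by
  obtain ⟨f, hf, rfl⟩ := hL
  obtain ⟨v, rfl⟩ := (dotProductEquiv ℂ (Fin 3)).surjective f
  exact ⟨v, by rintro rfl; simp at hf, fun p ↦ Iff.rfl⟩

namespace IsNet

variable {k m : ℕ} {A : Fin k → Finset (Set P2)} {X : Set P2}
  {κ : Type*} {c : Fin k → κ → Fin 3 → ℂ}

theorem crossProduct_ne_zero (hN : IsNet k m A X) (e : ∀ i, κ ≃ A i) (hc0 : ∀ i a, c i a ≠ 0)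
    (hc : ∀ i a (p : P2), p ∈ (e i a : Set P2) ↔ c i a ⬝ᵥ p.rep = 0) {i j : Fin k} {a b : κ}
    (hne : (i, a) ≠ (j, b)) : c i a ⨯₃ c j b ≠ 0 := by
  intro h
  have hL : (e i a : Set P2) = e j b := by
    ext p
    rw [hc, hc, dotProduct_eq_zero_iff_of_crossProduct_eq_zero (hc0 i a) (hc0 j b) h]
  obtain rfl : i = j := by
    by_contra hij
    exact Finset.disjoint_left.1 (hN.disj i j hij) (e i a).2 (hL ▸ (e j b).2)
  exact hne (by rw [(e i).injective (Subtype.ext hL)])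

theorem isLineNet (hN : IsNet k m A X) (e : ∀ i, κ ≃ A i) (hc0 : ∀ i a, c i a ≠ 0)
    (hc : ∀ i a (p : P2), p ∈ (e i a : Set P2) ↔ c i a ⬝ᵥ p.rep = 0) : IsLineNet c where
  crossProduct_ne_zero _ _ _ _ := hN.crossProduct_ne_zero e hc0 hc
  existsUnique i j hij a b l := by
    obtain ⟨p, hpX, hpa, hpb⟩ := hN.meets i j hij _ (e i a).2 _ (e j b).2
    have hp (d : κ) : c l d ⬝ᵥ c i a ⨯₃ c j b = 0 ↔ p ∈ (e l d : Set P2) := by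
      rw [hc, dotProduct_crossProduct_eq_zero_iff
        (hN.crossProduct_ne_zero e hc0 hc (by simp [hij])) p.rep_nonzero
        ((hc i a p).1 hpa) ((hc j b p).1 hpb)]
    simp only [hp]
    obtain ⟨L, ⟨hL, hpL⟩, huniq⟩ := hN.unique_through p hpX l
    obtain ⟨d, hd⟩ := (e l).surjective ⟨L, hL⟩
    refine ⟨d, by simpa only [hd] using hpL, fun d' hd' ↦ (e l).injective ?_⟩
    rw [hd]
    exact Subtype.ext (huniq _ ⟨(e l d').2, hd'⟩)

theorem exists_isLineNet (hN : IsNet k m A X) : ∃ c : Fin k → Fin m → Fin 3 → ℂ, IsLineNet c := by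
  let e (i : Fin k) : Fin m ≃ A i := ((A i).equivFinOfCardEq (hN.card_eq i)).symm
  choose c hc0 hc using fun i a ↦ (hN.lines i _ (e i a).2).exists_dotProduct
  exact ⟨c, hN.isLineNet e hc0 hc⟩

end IsNet

/-- For a nontrivial (k,m)-net in ℙ²(ℂ) one has k ≤ 5; moreover
if k = 4 then m ≥ 3 and if k = 5 then m ≥ 6. -/
theorem net_k_le_five (k m : ℕ) (A : Fin k → Finset (Set P2)) (X : Set P2)
    (hk : 3 ≤ k) (hm : 1 < m) (hN : IsNet k m A X) :
    k ≤ 5 ∧ (k = 4 → 3 ≤ m) ∧ (k = 5 → 6 ≤ m) := by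
  have : Nontrivial (Fin m) := Fin.nontrivial_iff_two_le.2 hm
  obtain ⟨c, hc⟩ := hN.exists_isLineNet
  simpa using net_k_le_five_general hc
end

section
/- Let (𝒜,𝒳) be a nontrivial (k,m)-net in ℙ²(ℂ) such that at least two of the classes are pencils. Then k = 3. -/
/-- A class of lines is a pencil if all of its lines pass through a common point. -/
def IsPencil (S : Finset (Set P2)) : Prop :=
  ∃ p : P2, ∀ L ∈ S, p ∈ L

/-!
Let `P ≠ Q` be the centers of two pencil classes. No point of `X` lies on the line `PQ`, so in the
affine chart having `PQ` as line at infinity the two pencils become parallel classes and `X` becomes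
a grid. A line of any other class contains exactly one point of `X` on each line of the `P`-pencil,
so up to a translation in the direction `P` the sum of its points of `X` does not depend on the
line; the same holds in the direction `Q`, so the sum does not depend on the line at all. As `m` is
invertible, the sum represents a point, the centroid of the grid, through which all the lines of
the other classes pass. Lines of two distinct classes cannot all be concurrent, so there is at most
one other class.
-/

open Module
open scoped LinearAlgebra.Projectivization

section ProjectiveLine

variable {K V : Type*} [DivisionRing K] [AddCommGroup V] [Module K V]

theorem mem_projectivization_iff_rep_mem (W : Submodule K V) (p : ℙ K V) :
    p ∈ W.projectivization ↔ p.rep ∈ W := by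
  rw [← W.mk_mem_projectivization_iff p.rep_nonzero, p.mk_rep]

theorem disjoint_submodule_of_ne {p q : ℙ K V} (hpq : p ≠ q) :
    Disjoint p.submodule q.submodule := by
  have hne := Projectivization.submodule_injective.ne hpq
  rw [p.submodule_eq, q.submodule_eq] at hne ⊢
  exact (nonzero_span_atom _ p.rep_nonzero).disjoint_of_ne
    (nonzero_span_atom _ q.rep_nonzero) hne

/-- A line of the projective space `ℙ K V`, of any dimension: the set of points of a
two-dimensional subspace of `V`. -/
def IsProjectiveLine (L : Set (ℙ K V)) : Prop :=
  ∃ W : Submodule K V, finrank K W = 2 ∧ L = W.projectivization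

theorem IsProjLine.isProjectiveLine {L : Set P2} (hL : IsProjLine L) : IsProjectiveLine L := by
  obtain ⟨f, hf, rfl⟩ := hL
  have hker : finrank ℂ (LinearMap.ker f) + 1 = 3 := by
    simpa using Dual.finrank_ker_add_one_of_ne_zero hf
  refine ⟨LinearMap.ker f, Nat.succ_injective hker, ?_⟩
  ext p
  exact (mem_projectivization_iff_rep_mem (LinearMap.ker f) p).symm

theorem exists_finrank_eq_two_mem_projectivization {p q : ℙ K V} (hpq : p ≠ q) :
    ∃ W : Submodule K V, finrank K W = 2 ∧ p ∈ W.projectivization ∧ q ∈ W.projectivization := by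
  have hindep := Projectivization.linearIndependent_pair_iff_ne.2 hpq
  refine ⟨Submodule.span K (Set.range ![p.rep, q.rep]), ?_, ?_, ?_⟩
  · simpa using finrank_span_eq_card hindep
  · exact (mem_projectivization_iff_rep_mem _ p).2 (Submodule.subset_span ⟨0, rfl⟩)
  · exact (mem_projectivization_iff_rep_mem _ q).2 (Submodule.subset_span ⟨1, rfl⟩)

namespace IsProjectiveLine

variable {L M : Set (ℙ K V)} {p q r : ℙ K V}

theorem eq_of_mem_of_mem (hL : IsProjectiveLine L) (hM : IsProjectiveLine M) (hpq : p ≠ q)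
    (hpL : p ∈ L) (hqL : q ∈ L) (hpM : p ∈ M) (hqM : q ∈ M) : L = M := by
  obtain ⟨W, hW, rfl⟩ := hL
  obtain ⟨W', hW', rfl⟩ := hM
  rw [Projectivization.line_unique hpq W W' hW hW' hpL hqL hpM hqM]

theorem eq_of_mem_inter (hL : IsProjectiveLine L) (hM : IsProjectiveLine M) (hLM : L ≠ M)
    (hp : p ∈ L ∩ M) (hq : q ∈ L ∩ M) : p = q := by
  by_contra hpq
  exact hLM (hL.eq_of_mem_of_mem hM hpq hp.1 hq.1 hp.2 hq.2)

theorem exists_smul_add_smul_eq_rep (hL : IsProjectiveLine L) (hpq : p ≠ q)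
    (hp : p ∈ L) (hq : q ∈ L) (hr : r ∈ L) : ∃ a b : K, a • p.rep + b • q.rep = r.rep := by
  obtain ⟨W, hW, rfl⟩ := hL
  have hspan : W = Submodule.span K {p.rep, q.rep} :=
    Projectivization.line_unique' p.rep_nonzero q.rep_nonzero
      (Projectivization.linearIndependent_pair_iff_ne.2 hpq) W hW
      (by rwa [p.mk_rep]) (by rwa [q.mk_rep])
  exact Submodule.mem_span_pair.1 (hspan ▸ (mem_projectivization_iff_rep_mem W r).1 hr)

theorem map_rep_ne_zero (hL : IsProjectiveLine L) {h : V →ₗ[K] K}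
    (hp : p ∈ L) (hq : q ∈ L) (hr : r ∈ L) (hpr : p ≠ r) (hhp : h p.rep = 0)
    (hhq : h q.rep ≠ 0) : h r.rep ≠ 0 := by
  intro hhr
  obtain ⟨a, b, hab⟩ := hL.exists_smul_add_smul_eq_rep hpr hp hr hq
  exact hhq (by simp [← hab, hhp, hhr])

end IsProjectiveLine

end ProjectiveLine

section PointSum

variable {K V : Type*} [DivisionRing K] [AddCommGroup V] [Module K V]

/-- The representative of `p` on the affine hyperplane `h = 1`. It is the affine coordinate of `p`
in the chart whose hyperplane at infinity is `h = 0`; at infinity its value is the junk `0`. -/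
noncomputable def affineRep (h : V →ₗ[K] K) (p : ℙ K V) : V :=
  (h p.rep)⁻¹ • p.rep

/-- The sum of the points of `S` in the affine chart `h = 1`: a multiple of their centroid that
makes sense whether or not the number of points is invertible in `K`. -/
noncomputable def pointSum (h : V →ₗ[K] K) (S : Set (ℙ K V)) : V :=
  ∑ᶠ p ∈ S, affineRep h p

variable {h : V →ₗ[K] K}

theorem map_affineRep {p : ℙ K V} (hp : h p.rep ≠ 0) : h (affineRep h p) = 1 := by
  rw [affineRep, map_smul, smul_eq_mul, inv_mul_cancel₀ hp]

theorem IsProjectiveLine.affineRep_smodEq {L : Set (ℙ K V)} {p q r : ℙ K V}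
    (hL : IsProjectiveLine L) (hp : p ∈ L) (hq : q ∈ L) (hr : r ∈ L) (hhp : h p.rep = 0)
    (hhq : h q.rep ≠ 0) (hhr : h r.rep ≠ 0) :
    affineRep h q ≡ affineRep h r [SMOD p.submodule] := by
  have hpr : p ≠ r := by
    rintro rfl
    exact hhr hhp
  obtain ⟨a, b, hab⟩ := hL.exists_smul_add_smul_eq_rep hpr hp hr hq
  have hb : h q.rep = b * h r.rep := by simp [← hab, hhp]
  have hcoef : (h q.rep)⁻¹ * b = (h r.rep)⁻¹ := by
    apply eq_inv_of_mul_eq_one_left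
    rw [mul_assoc, ← hb, inv_mul_cancel₀ hhq]
  have hdiff : affineRep h q - affineRep h r = ((h q.rep)⁻¹ * a) • p.rep := by
    rw [affineRep, affineRep, ← hcoef]
    nth_rw 2 [← hab]
    rw [smul_add, smul_smul, smul_smul, add_sub_cancel_right]
  rw [SModEq.sub_mem, p.submodule_eq, hdiff]
  exact Submodule.smul_mem _ _ (Submodule.mem_span_singleton_self _)

theorem pointSum_range {α : Type*} [Fintype α] {f : α → ℙ K V} (hf : Function.Injective f) :
    pointSum h (Set.range f) = ∑ a, affineRep h (f a) := by
  rw [pointSum, finsum_mem_range hf, finsum_eq_sum_of_fintype]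

theorem map_pointSum_range {α : Type*} [Fintype α] {f : α → ℙ K V} (hf : Function.Injective f)
    (hh : ∀ a, h (f a).rep ≠ 0) : h (pointSum h (Set.range f)) = Fintype.card α := by
  simp [pointSum_range hf, map_affineRep (hh _)]

theorem pointSum_mem {W : Submodule K V} {S : Set (ℙ K V)} (hS : S ⊆ W.projectivization) :
    pointSum h S ∈ W :=
  finsum_mem_induction (· ∈ W) W.zero_mem (fun _ _ ↦ W.add_mem) fun p hp ↦
    W.smul_mem _ ((mem_projectivization_iff_rep_mem W p).1 (hS hp))

theorem IsProjectiveLine.mk_pointSum_mem {L S : Set (ℙ K V)} (hL : IsProjectiveLine L)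
    (hS : S ⊆ L) (h0 : pointSum h S ≠ 0) : Projectivization.mk K (pointSum h S) h0 ∈ L := by
  obtain ⟨W, -, rfl⟩ := hL
  exact (W.mk_mem_projectivization_iff h0).2 (pointSum_mem hS)

end PointSum

/-- A net of lines with classes of cardinality `m` in the projective space `ℙ K V`, with classes
indexed by an arbitrary type. The finiteness of `X` and the disjointness of the classes, which the
nets of `IsNet` satisfy by definition, are not part of the structure. -/
structure IsProjectiveNet {K V ι : Type*} [DivisionRing K] [AddCommGroup V] [Module K V]
    (m : ℕ) (A : ι → Finset (Set (ℙ K V))) (X : Set (ℙ K V)) : Prop where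
  isProjectiveLine : ∀ i, ∀ L ∈ A i, IsProjectiveLine L
  card_eq : ∀ i, (A i).card = m
  exists_mem_inter : ∀ i j, i ≠ j → ∀ L ∈ A i, ∀ M ∈ A j, ∃ p ∈ X, p ∈ L ∧ p ∈ M
  existsUnique_mem : ∀ p ∈ X, ∀ i, ∃! L, L ∈ A i ∧ p ∈ L

theorem IsNet.isProjectiveNet {k m : ℕ} {A : Fin k → Finset (Set P2)} {X : Set P2}
    (hN : IsNet k m A X) : IsProjectiveNet m A X where
  isProjectiveLine i L hL := (hN.lines i L hL).isProjectiveLine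
  card_eq := hN.card_eq
  exists_mem_inter := hN.meets
  existsUnique_mem := hN.unique_through

namespace IsProjectiveNet

variable {K V ι : Type*} [DivisionRing K] [AddCommGroup V] [Module K V]
  {m : ℕ} {A : ι → Finset (Set (ℙ K V))} {X : Set (ℙ K V)} {i j c d : ι} {L M : Set (ℙ K V)}
  {P Q : ℙ K V}

theorem eq_of_mem_of_mem (hN : IsProjectiveNet m A X) (hP : P ∈ X) (hL : L ∈ A i) (hM : M ∈ A i)
    (hPL : P ∈ L) (hPM : P ∈ M) : L = M :=
  (hN.existsUnique_mem P hP i).unique ⟨hL, hPL⟩ ⟨hM, hPM⟩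

theorem nonempty (hN : IsProjectiveNet m A X) (hm : 1 < m) (i : ι) : (A i).Nonempty :=
  Finset.card_pos.1 (by rw [hN.card_eq]; exact zero_lt_one.trans hm)

theorem exists_mem_ne (hN : IsProjectiveNet m A X) (hm : 1 < m) (i : ι) (L : Set (ℙ K V)) :
    ∃ M ∈ A i, M ≠ L :=
  Finset.exists_mem_ne (by rwa [hN.card_eq]) L

theorem ne_of_mem_of_mem (hN : IsProjectiveNet m A X) (hm : 1 < m) (hij : i ≠ j) (hL : L ∈ A i)
    (hM : M ∈ A j) : L ≠ M := by
  rintro rfl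
  obtain ⟨L', hL', hne⟩ := hN.exists_mem_ne hm i L
  obtain ⟨p, hp, hpL', hpL⟩ := hN.exists_mem_inter i j hij L' hL' L hM
  exact hne (hN.eq_of_mem_of_mem hp hL' hL hpL' hpL)

theorem center_notMem (hN : IsProjectiveNet m A X) (hm : 1 < m) (hP : ∀ L ∈ A i, P ∈ L) :
    P ∉ X := by
  intro hPX
  obtain ⟨L, hL⟩ := hN.nonempty hm i
  obtain ⟨L', hL', hne⟩ := hN.exists_mem_ne hm i L
  exact hne (hN.eq_of_mem_of_mem hPX hL' hL (hP L' hL') (hP L hL))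

theorem center_ne_of_mem (hN : IsProjectiveNet m A X) (hm : 1 < m) (hP : ∀ L ∈ A i, P ∈ L)
    {r : ℙ K V} (hr : r ∈ X) : P ≠ r :=
  (ne_of_mem_of_not_mem hr (hN.center_notMem hm hP)).symm

theorem center_ne_center (hN : IsProjectiveNet m A X) (hm : 1 < m) (hij : i ≠ j)
    (hP : ∀ L ∈ A i, P ∈ L) (hQ : ∀ L ∈ A j, Q ∈ L) : P ≠ Q := by
  rintro rfl
  obtain ⟨L, hL⟩ := hN.nonempty hm i
  obtain ⟨M, hM⟩ := hN.nonempty hm j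
  obtain ⟨r, hr, hrL, hrM⟩ := hN.exists_mem_inter i j hij L hL M hM
  exact hN.center_ne_of_mem hm hP hr
    ((hN.isProjectiveLine i L hL).eq_of_mem_inter (hN.isProjectiveLine j M hM)
      (hN.ne_of_mem_of_mem hm hij hL hM) ⟨hP L hL, hQ M hM⟩ ⟨hrL, hrM⟩)

theorem exists_injective_range_eq_inter (hN : IsProjectiveNet m A X) (hm : 1 < m) (hci : c ≠ i)
    (hL : L ∈ A c) :
    ∃ f : A i → ℙ K V, Function.Injective f ∧ Set.range f = X ∩ L ∧ ∀ N : A i, f N ∈ N.1 := by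
  choose f hfX hfL hfN using fun N : A i ↦ hN.exists_mem_inter c i hci L hL N.1 N.2
  refine ⟨f, fun N N' hNN' ↦ ?_, Set.Subset.antisymm ?_ ?_, hfN⟩
  · exact Subtype.ext (hN.eq_of_mem_of_mem (hfX N) N.2 N'.2 (hfN N) (hNN' ▸ hfN N'))
  · rintro _ ⟨N, rfl⟩
    exact ⟨hfX N, hfL N⟩
  · rintro r ⟨hrX, hrL⟩
    obtain ⟨N, ⟨hNi, hrN⟩, -⟩ := hN.existsUnique_mem r hrX i
    exact ⟨⟨N, hNi⟩, (hN.isProjectiveLine c L hL).eq_of_mem_inter (hN.isProjectiveLine i N hNi)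
      (hN.ne_of_mem_of_mem hm hci hL hNi) ⟨hfL _, hfN ⟨N, hNi⟩⟩ ⟨hrL, hrN⟩⟩

theorem notMem_of_center_mem (hN : IsProjectiveNet m A X) (hm : 1 < m) (hij : i ≠ j)
    (hP : ∀ L ∈ A i, P ∈ L) (hQ : ∀ L ∈ A j, Q ∈ L) {N : Set (ℙ K V)} (hNl : IsProjectiveLine N)
    (hPN : P ∈ N) (hQN : Q ∈ N) {r : ℙ K V} (hr : r ∈ X) : r ∉ N := by
  intro hrN
  obtain ⟨L, ⟨hL, hrL⟩, -⟩ := hN.existsUnique_mem r hr i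
  obtain ⟨M, ⟨hM, hrM⟩, -⟩ := hN.existsUnique_mem r hr j
  have hLN : L = N := (hN.isProjectiveLine i L hL).eq_of_mem_of_mem hNl
    (hN.center_ne_of_mem hm hP hr) (hP L hL) hrL hPN hrN
  have hMN : M = N := (hN.isProjectiveLine j M hM).eq_of_mem_of_mem hNl
    (hN.center_ne_of_mem hm hQ hr) (hQ M hM) hrM hQN hrN
  exact hN.ne_of_mem_of_mem hm hij hL hM (hLN.trans hMN.symm)

theorem exists_map_eq_zero_map_ne_zero (hN : IsProjectiveNet m A X) (hm : 1 < m) (hij : i ≠ j)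
    (hP : ∀ L ∈ A i, P ∈ L) (hQ : ∀ L ∈ A j, Q ∈ L) :
    ∃ h : V →ₗ[K] K, h P.rep = 0 ∧ h Q.rep = 0 ∧ ∀ r ∈ X, h r.rep ≠ 0 := by
  obtain ⟨W, hW, hPW, hQW⟩ :=
    exists_finrank_eq_two_mem_projectivization (hN.center_ne_center hm hij hP hQ)
  obtain ⟨L, hL⟩ := hN.nonempty hm i
  obtain ⟨M, hM⟩ := hN.nonempty hm j
  obtain ⟨s, hs, -, hsM⟩ := hN.exists_mem_inter i j hij L hL M hM
  have hsW : s.rep ∉ W := fun hmem ↦ hN.notMem_of_center_mem hm hij hP hQ ⟨W, hW, rfl⟩ hPW hQW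
    hs ((mem_projectivization_iff_rep_mem W s).2 hmem)
  obtain ⟨h, hhs, hWh⟩ := Submodule.exists_le_ker_of_notMem hsW
  have hhP : h P.rep = 0 := hWh ((mem_projectivization_iff_rep_mem W P).1 hPW)
  have hhQ : h Q.rep = 0 := hWh ((mem_projectivization_iff_rep_mem W Q).1 hQW)
  refine ⟨h, hhP, hhQ, fun r hr ↦ ?_⟩
  -- `h ≠ 0` propagates from `s` to `t` along `M ∋ Q`, and from `t` to `r` along `N ∋ P`.
  obtain ⟨N, ⟨hNi, hrN⟩, -⟩ := hN.existsUnique_mem r hr i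
  obtain ⟨t, ht, htN, htM⟩ := hN.exists_mem_inter i j hij N hNi M hM
  have hht : h t.rep ≠ 0 := (hN.isProjectiveLine j M hM).map_rep_ne_zero (hQ M hM) hsM htM
    (hN.center_ne_of_mem hm hQ ht) hhQ hhs
  exact (hN.isProjectiveLine i N hNi).map_rep_ne_zero (hP N hNi) htN hrN
    (hN.center_ne_of_mem hm hP hr) hhP hht

variable {h : V →ₗ[K] K}

theorem map_pointSum (hN : IsProjectiveNet m A X) (hm : 1 < m) (hX : ∀ r ∈ X, h r.rep ≠ 0)
    (hci : c ≠ i) (hL : L ∈ A c) : h (pointSum h (X ∩ L)) = m := by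
  obtain ⟨f, hf, hfL, -⟩ := hN.exists_injective_range_eq_inter hm hci hL
  have hfX (N : A i) : f N ∈ X := (hfL.subset ⟨N, rfl⟩).1
  rw [← hfL, map_pointSum_range hf fun N ↦ hX _ (hfX N), Fintype.card_coe, hN.card_eq]

theorem pointSum_smodEq (hN : IsProjectiveNet m A X) (hm : 1 < m) (hX : ∀ r ∈ X, h r.rep ≠ 0)
    (hP : ∀ L ∈ A i, P ∈ L) (hhP : h P.rep = 0) (hci : c ≠ i) (hdi : d ≠ i) (hL : L ∈ A c)
    (hM : M ∈ A d) : pointSum h (X ∩ L) ≡ pointSum h (X ∩ M) [SMOD P.submodule] := by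
  obtain ⟨f, hf, hfL, hfN⟩ := hN.exists_injective_range_eq_inter hm hci hL
  obtain ⟨g, hg, hgM, hgN⟩ := hN.exists_injective_range_eq_inter hm hdi hM
  rw [← hfL, ← hgM, pointSum_range hf, pointSum_range hg]
  exact SModEq.sum fun N _ ↦ (hN.isProjectiveLine i N.1 N.2).affineRep_smodEq (hP N.1 N.2)
    (hfN N) (hgN N) hhP (hX _ (hfL.subset ⟨N, rfl⟩).1) (hX _ (hgM.subset ⟨N, rfl⟩).1)

theorem pointSum_eq_pointSum (hN : IsProjectiveNet m A X) (hm : 1 < m) (hij : i ≠ j)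
    (hP : ∀ L ∈ A i, P ∈ L) (hQ : ∀ L ∈ A j, Q ∈ L) (hX : ∀ r ∈ X, h r.rep ≠ 0)
    (hhP : h P.rep = 0) (hhQ : h Q.rep = 0) (hci : c ≠ i) (hcj : c ≠ j) (hdi : d ≠ i) (hdj : d ≠ j)
    (hL : L ∈ A c) (hM : M ∈ A d) : pointSum h (X ∩ L) = pointSum h (X ∩ M) := by
  have hdisj := disjoint_submodule_of_ne (hN.center_ne_center hm hij hP hQ)
  exact sub_eq_zero.1 (Submodule.disjoint_def.1 hdisj _
    (SModEq.sub_mem.1 (hN.pointSum_smodEq hm hX hP hhP hci hdi hL hM))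
    (SModEq.sub_mem.1 (hN.pointSum_smodEq hm hX hQ hhQ hcj hdj hL hM)))

theorem exists_common_point (hN : IsProjectiveNet m A X) (hm : 1 < m) (hmK : (m : K) ≠ 0)
    (hij : i ≠ j) (hP : ∀ L ∈ A i, P ∈ L) (hQ : ∀ L ∈ A j, Q ∈ L) (hci : c ≠ i) (hcj : c ≠ j) :
    ∃ O, ∀ d, d ≠ i → d ≠ j → ∀ M ∈ A d, O ∈ M := by
  obtain ⟨h, hhP, hhQ, hX⟩ := hN.exists_map_eq_zero_map_ne_zero hm hij hP hQ
  obtain ⟨L, hL⟩ := hN.nonempty hm c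
  have h0 : pointSum h (X ∩ L) ≠ 0 := by
    intro hzero
    apply hmK
    rw [← hN.map_pointSum hm hX hci hL, hzero, map_zero]
  refine ⟨Projectivization.mk K _ h0, fun d hdi hdj M hM ↦ ?_⟩
  have hLM := hN.pointSum_eq_pointSum hm hij hP hQ hX hhP hhQ hci hcj hdi hdj hL hM
  simp only [hLM]
  exact (hN.isProjectiveLine d M hM).mk_pointSum_mem Set.inter_subset_right _

theorem subsingleton_compl_pair (hN : IsProjectiveNet m A X) (hm : 1 < m) (hmK : (m : K) ≠ 0)
    (hij : i ≠ j) (hP : ∀ L ∈ A i, P ∈ L) (hQ : ∀ L ∈ A j, Q ∈ L) :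
    ({i, j}ᶜ : Set ι).Subsingleton := by
  intro c hc d hd
  simp only [Set.mem_compl_iff, Set.mem_insert_iff, Set.mem_singleton_iff, not_or] at hc hd
  obtain ⟨O, hO⟩ := hN.exists_common_point hm hmK hij hP hQ hc.1 hc.2
  by_contra hcd
  exact hN.center_ne_center hm hcd (hO c hc.1 hc.2) (hO d hd.1 hd.2) rfl

end IsProjectiveNet

theorem net_with_two_pencils_k_eq_three_general {K V ι : Type*} [DivisionRing K] [AddCommGroup V]
    [Module K V] {m : ℕ} {A : ι → Finset (Set (ℙ K V))} {X : Set (ℙ K V)}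
    (hN : IsProjectiveNet m A X) (hm : 1 < m) (hmK : (m : K) ≠ 0) {i j : ι} (hij : i ≠ j)
    {P Q : ℙ K V} (hP : ∀ L ∈ A i, P ∈ L) (hQ : ∀ L ∈ A j, Q ∈ L) : ENat.card ι ≤ 3 :=
  calc ENat.card ι = ({i, j} : Set ι).encard + ({i, j}ᶜ : Set ι).encard := by
        rw [Set.encard_add_encard_compl, Set.encard_univ]
    _ ≤ 2 + 1 := by
        gcongr
        · exact (Set.encard_pair hij).le
        · exact Set.encard_le_one_iff_subsingleton.2
            (hN.subsingleton_compl_pair hm hmK hij hP hQ)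
    _ = 3 := by norm_num

/-- For a nontrivial (k,m)-net in ℙ²(ℂ) with at least two classes
being pencils, one has k = 3. -/
theorem net_with_two_pencils_k_eq_three (k m : ℕ) (A : Fin k → Finset (Set P2)) (X : Set P2)
    (hk : 3 ≤ k) (hm : 1 < m) (hN : IsNet k m A X)
    (hpen : ∃ i j : Fin k, i ≠ j ∧ IsPencil (A i) ∧ IsPencil (A j)) :
    k = 3 := by
  obtain ⟨i, j, hij, ⟨P, hP⟩, ⟨Q, hQ⟩⟩ := hpen
  have hcard := net_with_two_pencils_k_eq_three_general hN.isProjectiveNet hm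
    (Nat.cast_ne_zero.2 (Nat.ne_zero_of_lt hm)) hij hP hQ
  exact le_antisymm (by simpa using hcard) hk
end

section
/- Let (𝒜,𝒳) be a nontrivial (k,m)-net in ℙ²(ℂ), and for each line l ∈ 𝒜 fix a nonzero linear form α_l on ℂ³ whose zero locus is l. For each class i set g_i = ∏_{l ∈ 𝒜_i} α_l, a homogeneous polynomial of degree m. Then for every i with 3 ≤ i ≤ k, the polynomial g_i lies in the ℂ-linear span of g₁ and g₂; that is, all the split curves C_i = {g_i = 0} are fibers of the pencil of degree-m curves generated by any two of them. -/
/-!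
Let `g i` be the product of the forms of the class `i`. All the `g i` are homogeneous of degree `m`
and vanish on `X`, and a line `l` of the class `i₀` contains exactly `m` points of `X`, cut out on
it by the lines of the class `i₁`. Hence the restriction of `g i` to `l` is a multiple `c l` of
that of `g i₁`. Two lines `l`, `l'` of the class `i₀` meet at a point outside `X`, where
`g i₁` does not vanish, so `c l = c l'`. Thus every line of the class `i₀` divides
`g i - c * g i₁` for a single constant `c`. As these lines are pairwise coprime, `g i₀` divides this
form of the same degree `m`, and the quotient is a constant.
-/

section

open MvPolynomial

section Homogeneous

variable {σ R : Type*}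

lemma homogeneousComponent_add_mul [CommSemiring R] {b : MvPolynomial σ R} {n : ℕ}
    (hb : b.IsHomogeneous n) (d : ℕ) (a : MvPolynomial σ R) :
    homogeneousComponent (d + n) (a * b) = homogeneousComponent d a * b := by
  let := gradedAlgebra (σ := σ) (R := R)
  have decompose_eq (q : MvPolynomial σ R) (k : ℕ) :
      (DirectSum.decompose (homogeneousSubmodule σ R) q k : MvPolynomial σ R) =
        homogeneousComponent k q := decomposition.decompose'_apply q k
  simpa only [decompose_eq] using
    DirectSum.coe_decompose_mul_add_of_right_mem (homogeneousSubmodule σ R) (i := d) (a := a)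
      ((mem_homogeneousSubmodule n b).mpr hb)

lemma exists_eq_C_mul_of_isHomogeneous_of_dvd [CommSemiring R] {f g : MvPolynomial σ R} {n : ℕ}
    (hf : f.IsHomogeneous n) (hg : g.IsHomogeneous n) (hfg : f ∣ g) : ∃ c : R, g = C c * f := by
  obtain ⟨q, rfl⟩ := hfg
  refine ⟨coeff 0 q, ?_⟩
  calc f * q = homogeneousComponent (0 + n) (q * f) := by
        rw [zero_add, mul_comm q, homogeneousComponent_eq_self hg]
    _ = C (coeff 0 q) * f := by
        rw [homogeneousComponent_add_mul hf, homogeneousComponent_zero]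

lemma exists_isHomogeneous_dvd_sub_mul [CommRing R] {a b h : MvPolynomial σ R} {n d : ℕ}
    (ha : a.IsHomogeneous n) (hb : b.IsHomogeneous n) (hh : h.IsHomogeneous (d + n))
    (hmem : h ∈ Ideal.span {a, b}) :
    ∃ v : MvPolynomial σ R, v.IsHomogeneous d ∧ a ∣ h - v * b := by
  obtain ⟨u, v, huv⟩ := Ideal.mem_span_pair.mp hmem
  refine ⟨homogeneousComponent d v, homogeneousComponent_isHomogeneous d v,
    homogeneousComponent d u, ?_⟩
  rw [← homogeneousComponent_eq_self hh, ← huv, map_add, homogeneousComponent_add_mul ha,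
    homogeneousComponent_add_mul hb]
  ring

lemma aeval_mul_of_isHomogeneous {S : Type*} [CommSemiring R] [CommSemiring S] [Algebra R S]
    {h : MvPolynomial σ R} {d : ℕ} (hh : h.IsHomogeneous d) (x : σ → S) (t : S) :
    aeval (fun i => x i * t) h = aeval x h * t ^ d := by
  simp only [aeval_def, eval₂_eq, Finset.sum_mul]
  refine Finset.sum_congr rfl fun s hs => ?_
  rw [hh.degree_eq_sum_deg_support hs, mul_assoc]
  simp only [mul_pow, Finset.prod_mul_distrib, Finset.prod_pow_eq_pow_sum]

lemma exists_linearMap_eq_eval [CommSemiring R] [Finite σ] {a : MvPolynomial σ R}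
    (ha : a.IsHomogeneous 1) : ∃ f : (σ → R) →ₗ[R] R, ∀ x, f x = eval x a := by
  have := Fintype.ofFinite σ
  rw [← mem_homogeneousSubmodule, homogeneousSubmodule_one_eq_span_X,
    Submodule.mem_span_range_iff_exists_fun] at ha
  obtain ⟨c, rfl⟩ := ha
  exact ⟨∑ i, c i • LinearMap.proj i, fun x => by simp [smul_eval]⟩

lemma mem_ideal_of_eval_eq_zero {K : Type*} [Field K] {I : Ideal (MvPolynomial σ K)} {p : σ → K}
    (hp : p ≠ 0) (hI : ∀ a : MvPolynomial σ K, a.IsHomogeneous 1 → eval p a = 0 → a ∈ I)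
    {h : MvPolynomial σ K} {d : ℕ} (hh : h.IsHomogeneous d) (hhp : eval p h = 0) : h ∈ I := by
  obtain ⟨j, hj : p j ≠ 0⟩ := Function.ne_iff.mp hp
  -- Modulo `I` every `X i` is `p i * t`, so a form `h` of degree `d` is `h(p) * t ^ d`.
  let π := Ideal.Quotient.mkₐ K I
  let t : MvPolynomial σ K := C (p j)⁻¹ * X j
  have hX (i : σ) : π (X i) = algebraMap K _ (p i) * π t := by
    rw [← π.commutes, ← map_mul]
    refine Ideal.Quotient.eq.mpr (hI _ ?_ ?_)
    · exact (isHomogeneous_X K i).sub ((isHomogeneous_C_mul_X (p j)⁻¹ j).C_mul (p i))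
    · simp [t, algebraMap_eq, hj]
  refine Ideal.Quotient.eq_zero_iff_mem.mp ?_
  calc π h = aeval (fun i => π (X i)) h := DFunLike.congr_fun (aeval_unique π) h
    _ = aeval (fun i => algebraMap K _ (p i)) h * π t ^ d := by
        simp only [hX, aeval_mul_of_isHomogeneous hh]
    _ = algebraMap K _ (eval p h) * π t ^ d := by
        rw [← coe_aeval_eq_eval, RingHom.coe_coe, ← aeval_algebraMap_apply]; rfl
    _ = 0 := by rw [hhp, map_zero, zero_mul]

end Homogeneous

section LinearForm

variable {σ K : Type*} [Field K]

lemma irreducible_of_isHomogeneous_one {a : MvPolynomial σ K} (ha : a.IsHomogeneous 1)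
    (ha0 : a ≠ 0) : Irreducible a := by
  refine irreducible_of_totalDegree_eq_one (ha.totalDegree ha0) fun x hx => ?_
  obtain ⟨s, hs⟩ := exists_coeff_ne_zero ha0
  exact isUnit_of_dvd_unit (hx s) hs.isUnit

lemma linearIndependent_pair_of_zeroLocus_ne {a b : MvPolynomial σ K}
    (ha : a ≠ 0) (hb : b ≠ 0)
    (hne : {p : Projectivization K (σ → K) | eval p.rep a = 0} ≠ {p | eval p.rep b = 0}) :
    LinearIndependent K ![a, b] := by
  rw [LinearIndependent.pair_iff' ha]
  rintro c rfl
  have hc : c ≠ 0 := (smul_ne_zero_iff.mp hb).1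
  exact hne (by simp [smul_eval, hc])

lemma exists_ne_zero_forall_eval_eq_zero [Finite σ] {ι : Type*} [Finite ι]
    (hcard : Nat.card ι < Nat.card σ) {a : ι → MvPolynomial σ K}
    (ha : ∀ i, (a i).IsHomogeneous 1) : ∃ x : σ → K, x ≠ 0 ∧ ∀ i, eval x (a i) = 0 := by
  have := Fintype.ofFinite σ
  have := Fintype.ofFinite ι
  choose f hf using fun i => exists_linearMap_eq_eval (ha i)
  obtain ⟨x, hx, hx0⟩ := (LinearMap.pi f).ker.ne_bot_iff.mp
    (LinearMap.ker_ne_bot_of_finrank_lt (by simpa using hcard))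
  exact ⟨x, hx0, fun i => (hf i x).symm.trans (congrFun hx i)⟩

lemma eq_zero_of_linearIndependent_of_forall_eval_eq_zero [Finite σ] {a : σ → MvPolynomial σ K}
    (ha : ∀ i, (a i).IsHomogeneous 1) (hli : LinearIndependent K a) {p : σ → K}
    (hp : ∀ i, eval p (a i) = 0) : p = 0 := by
  have := Fintype.ofFinite σ
  have hle : Submodule.span K (Set.range a) ≤ Submodule.span K (Set.range X) := by
    rw [← homogeneousSubmodule_one_eq_span_X, Submodule.span_le]
    rintro _ ⟨i, rfl⟩
    exact ha i
  have hspan : Submodule.span K (Set.range a) = Submodule.span K (Set.range X) := by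
    have : FiniteDimensional K (Submodule.span K (Set.range (X : σ → MvPolynomial σ K))) :=
      FiniteDimensional.span_of_finite K (Set.finite_range _)
    refine Submodule.eq_of_le_of_finrank_eq hle ?_
    rw [finrank_span_eq_card hli, finrank_span_eq_card (linearIndependent_X σ K)]
  have hker : Submodule.span K (Set.range a) ≤
      (aeval p : MvPolynomial σ K →ₐ[K] K).toLinearMap.ker := by
    rw [Submodule.span_le]
    rintro _ ⟨i, rfl⟩
    simpa [coe_aeval_eq_eval] using hp i
  funext i
  have hXi : X i ∈ Submodule.span K (Set.range a) := hspan ▸ Submodule.subset_span ⟨i, rfl⟩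
  simpa using hker hXi

lemma mem_span_pair_of_eval_eq_zero {a b c : MvPolynomial (Fin 3) K} {p : Fin 3 → K}
    (ha : a.IsHomogeneous 1) (hb : b.IsHomogeneous 1) (hab : LinearIndependent K ![a, b])
    (hp : p ≠ 0) (hap : eval p a = 0) (hbp : eval p b = 0)
    (hc : c.IsHomogeneous 1) (hcp : eval p c = 0) : c ∈ Submodule.span K {a, b} := by
  by_contra hmem
  refine hp (eq_zero_of_linearIndependent_of_forall_eval_eq_zero (a := ![c, a, b]) ?_
    (hab.finCons (by rwa [Matrix.range_cons_cons_empty])) ?_)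
  · simp [Fin.forall_fin_succ, ha, hb, hc]
  · simp [Fin.forall_fin_succ, hap, hbp, hcp]

lemma exists_isHomogeneous_dvd_sub_mul_of_eval_eq_zero {a b h : MvPolynomial (Fin 3) K}
    {p : Fin 3 → K} {d : ℕ} (ha : a.IsHomogeneous 1) (hb : b.IsHomogeneous 1)
    (hab : LinearIndependent K ![a, b]) (hp : p ≠ 0) (hap : eval p a = 0) (hbp : eval p b = 0)
    (hh : h.IsHomogeneous (d + 1)) (hhp : eval p h = 0) :
    ∃ v : MvPolynomial (Fin 3) K, v.IsHomogeneous d ∧ a ∣ h - v * b := by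
  refine exists_isHomogeneous_dvd_sub_mul ha hb hh (mem_ideal_of_eval_eq_zero hp ?_ hh hhp)
  intro c hc hcp
  exact Submodule.span_le_restrictScalars K (MvPolynomial (Fin 3) K) {a, b}
    (mem_span_pair_of_eval_eq_zero ha hb hab hp hap hbp hc hcp)

lemma exists_dvd_sub_C_mul_prod {ι : Type*} {S : Finset ι} {a h : MvPolynomial (Fin 3) K}
    {b : ι → MvPolynomial (Fin 3) K} {p : ι → Fin 3 → K} (ha : a.IsHomogeneous 1)
    (hb : ∀ i ∈ S, (b i).IsHomogeneous 1) (hab : ∀ i ∈ S, LinearIndependent K ![a, b i])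
    (hp : ∀ i ∈ S, p i ≠ 0) (hap : ∀ i ∈ S, eval (p i) a = 0)
    (hbp : ∀ i ∈ S, ∀ j ∈ S, eval (p i) (b j) = 0 ↔ i = j)
    (hh : h.IsHomogeneous S.card) (hhp : ∀ i ∈ S, eval (p i) h = 0) :
    ∃ c : K, a ∣ h - C c * ∏ i ∈ S, b i := by
  classical
  induction S using Finset.induction_on generalizing h with
  | empty =>
    obtain ⟨c, rfl⟩ := exists_eq_C_mul_of_isHomogeneous_of_dvd
      (isHomogeneous_one (Fin 3) K) hh (one_dvd h)
    exact ⟨c, by simp⟩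
  | insert j S hj ih =>
    have hbj : eval (p j) (b j) = 0 :=
      (hbp j (Finset.mem_insert_self j S) j (Finset.mem_insert_self j S)).mpr rfl
    simp only [Finset.forall_mem_insert] at hb hab hp hap hbp hhp
    rw [Finset.card_insert_of_notMem hj] at hh
    obtain ⟨v, hv, hdvd⟩ := exists_isHomogeneous_dvd_sub_mul_of_eval_eq_zero ha hb.1 hab.1
      hp.1 hap.1 hbj hh hhp.1
    have hvp : ∀ i ∈ S, eval (p i) v = 0 := by
      intro i hi
      have hbij : eval (p i) (b j) ≠ 0 := fun h0 => hj ((hbp.2 i hi).1.mp h0 ▸ hi)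
      have hvb := zero_dvd_iff.mp (hap.2 i hi ▸ map_dvd (eval (p i)) hdvd)
      rw [map_sub, map_mul, hhp.2 i hi, zero_sub, neg_eq_zero] at hvb
      exact (mul_eq_zero.mp hvb).resolve_right hbij
    obtain ⟨c, hc⟩ := ih hb.2 hab.2 hp.2 hap.2 (fun i hi => (hbp.2 i hi).2) hv hvp
    refine ⟨c, ?_⟩
    have hsplit : h - C c * ∏ i ∈ insert j S, b i =
        (h - v * b j) + (v - C c * ∏ i ∈ S, b i) * b j := by
      rw [Finset.prod_insert hj]; ring
    exact hsplit ▸ dvd_add hdvd (hc.mul_right _)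

end LinearForm

/-- A net in the projective plane over a field, presented by linear forms: the lines are indexed
by `𝓛`, `α l` is an equation of the line `l`, and `A i` is the `i`-th class, consisting of `m`
lines. Linear independence of `α l` and `α l'` encodes that `l` and `l'` are distinct lines. -/
structure IsFormNet {K ι 𝓛 : Type*} [Field K] (m : ℕ) (A : ι → Finset 𝓛)
    (X : Set (Projectivization K (Fin 3 → K))) (α : 𝓛 → MvPolynomial (Fin 3) K) : Prop where
  isHomogeneous : ∀ i, ∀ l ∈ A i, (α l).IsHomogeneous 1
  card_eq : ∀ i, (A i).card = m
  linearIndependent : ∀ i j, i ≠ j → ∀ l ∈ A i, ∀ l' ∈ A j, LinearIndependent K ![α l, α l']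
  meets : ∀ i j, i ≠ j → ∀ l ∈ A i, ∀ l' ∈ A j,
    ∃ p ∈ X, eval p.rep (α l) = 0 ∧ eval p.rep (α l') = 0
  unique_through : ∀ p ∈ X, ∀ i, ∃! l, l ∈ A i ∧ eval p.rep (α l) = 0

namespace IsFormNet

variable {K ι 𝓛 : Type*} [Field K] {m : ℕ} {A : ι → Finset 𝓛}
  {X : Set (Projectivization K (Fin 3 → K))} {α : 𝓛 → MvPolynomial (Fin 3) K}
  {i₀ i₁ : ι} {l l' : 𝓛}

lemma isHomogeneous_prod (hN : IsFormNet m A X α) (i : ι) :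
    (∏ l ∈ A i, α l).IsHomogeneous m := by
  simpa [hN.card_eq i] using IsHomogeneous.prod (A i) α (fun _ => 1) (hN.isHomogeneous i)

lemma eval_prod_eq_zero (hN : IsFormNet m A X α) {p : Projectivization K (Fin 3 → K)}
    (hp : p ∈ X) (i : ι) : eval p.rep (∏ l ∈ A i, α l) = 0 := by
  obtain ⟨l, ⟨hl, hpl⟩, -⟩ := hN.unique_through p hp i
  rw [map_prod]
  exact Finset.prod_eq_zero hl hpl

lemma exists_dvd_sub (hN : IsFormNet m A X α) (h₀₁ : i₀ ≠ i₁) (hl : l ∈ A i₀) (i : ι) :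
    ∃ c : K, α l ∣ ∏ l' ∈ A i, α l' - C c * ∏ l' ∈ A i₁, α l' := by
  choose! p hpX hpl hpl' using hN.meets i₀ i₁ h₀₁ l hl
  refine exists_dvd_sub_C_mul_prod (p := fun l' => (p l').rep) (hN.isHomogeneous i₀ l hl)
    (hN.isHomogeneous i₁) (hN.linearIndependent i₀ i₁ h₀₁ l hl) (fun l' _ => (p l').rep_nonzero)
    hpl ?_ ((hN.card_eq i₁).symm ▸ hN.isHomogeneous_prod i)
    (fun l' hl' => hN.eval_prod_eq_zero (hpX l' hl') i)
  intro l₁ hl₁ l₂ hl₂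
  refine ⟨fun h0 => ?_, fun h => h ▸ hpl' l₁ hl₁⟩
  exact (hN.unique_through _ (hpX l₁ hl₁) i₁).unique ⟨hl₁, hpl' l₁ hl₁⟩ ⟨hl₂, h0⟩

lemma eval_prod_ne_zero (hN : IsFormNet m A X α) (h₀₁ : i₀ ≠ i₁) (hl : l ∈ A i₀)
    (hl' : l' ∈ A i₀) (hne : l ≠ l') {q : Fin 3 → K} (hq : q ≠ 0) (hlq : eval q (α l) = 0)
    (hlq' : eval q (α l') = 0) : eval q (∏ n ∈ A i₁, α n) ≠ 0 := by
  rw [map_prod]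
  refine Finset.prod_ne_zero_iff.mpr fun n hn hnq => hne ?_
  obtain ⟨p, hpX, hpl, hpn⟩ := hN.meets i₀ i₁ h₀₁ l hl n hn
  have hmem := mem_span_pair_of_eval_eq_zero (hN.isHomogeneous i₀ l hl)
    (hN.isHomogeneous i₁ n hn) (hN.linearIndependent i₀ i₁ h₀₁ l hl n hn) hq hlq hnq
    (hN.isHomogeneous i₀ l' hl') hlq'
  obtain ⟨s, t, hst⟩ := Submodule.mem_span_pair.mp hmem
  have hpl' : eval p.rep (α l') = 0 := by simp [← hst, smul_eval, hpl, hpn]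
  exact (hN.unique_through p hpX i₀).unique ⟨hl, hpl⟩ ⟨hl', hpl'⟩

lemma eq_of_dvd_sub (hN : IsFormNet m A X α) (h₀₁ : i₀ ≠ i₁) (hl : l ∈ A i₀) (hl' : l' ∈ A i₀)
    (hne : l ≠ l') {g : MvPolynomial (Fin 3) K} {c c' : K}
    (hc : α l ∣ g - C c * ∏ n ∈ A i₁, α n) (hc' : α l' ∣ g - C c' * ∏ n ∈ A i₁, α n) :
    c = c' := by
  obtain ⟨q, hq, hlq⟩ := exists_ne_zero_forall_eval_eq_zero (a := ![α l, α l']) (by simp)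
    (by simp [Fin.forall_fin_two, hN.isHomogeneous i₀ _ hl, hN.isHomogeneous i₀ _ hl'])
  simp only [Fin.forall_fin_two, Matrix.cons_val_zero, Matrix.cons_val_one] at hlq
  have hgc := zero_dvd_iff.mp (hlq.1 ▸ map_dvd (eval q) hc)
  have hgc' := zero_dvd_iff.mp (hlq.2 ▸ map_dvd (eval q) hc')
  rw [map_sub, map_mul, eval_C, sub_eq_zero] at hgc hgc'
  exact mul_right_cancel₀ (hN.eval_prod_ne_zero h₀₁ hl hl' hne hq hlq.1 hlq.2)
    (hgc.symm.trans hgc')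

lemma exists_forall_dvd_sub (hN : IsFormNet m A X α) (h₀₁ : i₀ ≠ i₁) (i : ι) :
    ∃ c : K, ∀ l ∈ A i₀, α l ∣ ∏ l' ∈ A i, α l' - C c * ∏ l' ∈ A i₁, α l' := by
  obtain hempty | ⟨l₀, hl₀⟩ := (A i₀).eq_empty_or_nonempty
  · exact ⟨0, by simp [hempty]⟩
  obtain ⟨c, hc⟩ := hN.exists_dvd_sub h₀₁ hl₀ i
  refine ⟨c, fun l hl => ?_⟩
  obtain rfl | hne := eq_or_ne l₀ l
  · exact hc
  obtain ⟨c', hc'⟩ := hN.exists_dvd_sub h₀₁ hl i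
  rwa [hN.eq_of_dvd_sub h₀₁ hl₀ hl hne hc hc']

lemma pairwise_isRelPrime (hN : IsFormNet m A X α) (h₀₁ : i₀ ≠ i₁) :
    (A i₀ : Set 𝓛).Pairwise (Function.onFun IsRelPrime α) := by
  intro l hl l' hl' hne
  obtain ⟨n, hn⟩ : (A i₁).Nonempty := by
    rw [← Finset.card_pos, hN.card_eq i₁, ← hN.card_eq i₀]
    exact Finset.card_pos.mpr ⟨l, hl⟩
  have hirr := irreducible_of_isHomogeneous_one (hN.isHomogeneous i₀ l hl)
    ((hN.linearIndependent i₀ i₁ h₀₁ l hl n hn).ne_zero 0)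
  refine hirr.isRelPrime_iff_not_dvd.mpr fun hdvd => hne ?_
  obtain ⟨p, hpX, hpl, -⟩ := hN.meets i₀ i₁ h₀₁ l hl n hn
  have hpl' := zero_dvd_iff.mp (hpl ▸ map_dvd (eval p.rep) hdvd)
  exact (hN.unique_through p hpX i₀).unique ⟨hl, hpl⟩ ⟨hl', hpl'⟩

end IsFormNet

theorem net_split_curves_form_pencil_general {K ι 𝓛 : Type*} [Field K] {m : ℕ}
    {A : ι → Finset 𝓛} {X : Set (Projectivization K (Fin 3 → K))}
    {α : 𝓛 → MvPolynomial (Fin 3) K} (hN : IsFormNet m A X α) {i₀ i₁ : ι} (h₀₁ : i₀ ≠ i₁)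
    (i : ι) : ∏ l ∈ A i, α l ∈ Submodule.span K {∏ l ∈ A i₀, α l, ∏ l ∈ A i₁, α l} := by
  obtain ⟨c, hc⟩ := hN.exists_forall_dvd_sub h₀₁ i
  have hdvd : ∏ l ∈ A i₀, α l ∣ ∏ l ∈ A i, α l - C c * ∏ l ∈ A i₁, α l :=
    Finset.prod_dvd_of_isRelPrime (hN.pairwise_isRelPrime h₀₁) hc
  obtain ⟨d, hd⟩ := exists_eq_C_mul_of_isHomogeneous_of_dvd (hN.isHomogeneous_prod i₀)
    ((hN.isHomogeneous_prod i).sub ((hN.isHomogeneous_prod i₁).C_mul c)) hdvd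
  refine Submodule.mem_span_pair.mpr ⟨d, c, ?_⟩
  rw [smul_eq_C_mul, smul_eq_C_mul, ← hd, sub_add_cancel]

lemma IsNet.isFormNet {k m : ℕ} {A : Fin k → Finset (Set P2)} {X : Set P2}
    (hN : IsNet k m A X) {α : Set P2 → MvPolynomial (Fin 3) ℂ}
    (hα : ∀ i : Fin k, ∀ L ∈ A i, α L ≠ 0 ∧ (α L).IsHomogeneous 1 ∧
      L = {p : P2 | eval p.rep (α L) = 0}) : IsFormNet m A X α := by
  have mem_iff {i : Fin k} {L : Set P2} (hL : L ∈ A i) (p : P2) :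
      p ∈ L ↔ eval p.rep (α L) = 0 := Set.ext_iff.mp (hα i L hL).2.2 p
  refine ⟨fun i L hL => (hα i L hL).2.1, hN.card_eq, ?_, ?_, ?_⟩
  · intro i j hij L hL L' hL'
    refine linearIndependent_pair_of_zeroLocus_ne (hα i L hL).1 (hα j L' hL').1 ?_
    rw [← (hα i L hL).2.2, ← (hα j L' hL').2.2]
    exact Finset.disjoint_iff_ne.mp (hN.disj i j hij) L hL L' hL'
  · intro i j hij L hL L' hL'
    simpa only [mem_iff hL, mem_iff hL'] using hN.meets i j hij L hL L' hL'
  · intro p hp i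
    simpa only [and_congr_right fun hL => mem_iff hL p] using hN.unique_through p hp i

end

open MvPolynomial in
/-- If, for each line `L` of a nontrivial (k,m)-net, `α L` is a nonzero
linear (degree-1 homogeneous) form cutting out `L`, and `g i = ∏_{L ∈ 𝒜ᵢ} α L`, then
every `g i` lies in the ℂ-linear span of `g 0` and `g 1`: all the split curves are
fibers of the pencil generated by any two of them. -/
theorem net_split_curves_form_pencil (k m : ℕ) (A : Fin k → Finset (Set P2)) (X : Set P2)
    (hk : 3 ≤ k) (hm : 1 < m) (hN : IsNet k m A X)
    (α : Set P2 → MvPolynomial (Fin 3) ℂ)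
    (hα : ∀ i : Fin k, ∀ L ∈ A i, α L ≠ 0 ∧ (α L).IsHomogeneous 1 ∧
      L = {p : P2 | MvPolynomial.eval p.rep (α L) = 0}) :
    ∀ i : Fin k,
      (∏ L ∈ A i, α L) ∈
        Submodule.span ℂ {∏ L ∈ A ⟨0, by omega⟩, α L, ∏ L ∈ A ⟨1, by omega⟩, α L} := by
  exact fun i => net_split_curves_form_pencil_general (hN.isFormNet hα) (by simp) i
end

section
/- Let (𝒜,𝒳) be a nontrivial (3,m)-net in ℙ²(ℂ) all three of whose classes are pencils. Then there exists a linear automorphism T ∈ GL(3,ℂ) such that, in the homogeneous coordinates (x,y,z) obtained from T, the class 𝒜₁ consists exactly of the m lines {x = ζy} with ζ^m = 1 (the components of x^m − y^m = 0), 𝒜₂ consists of the m lines {x = ζz} with ζ^m = 1, and 𝒜₃ consists of the m lines {y = ζz} with ζ^m = 1. In particular such a net is projectively unique and realizes the cyclic group ℤ/mℤ. -/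
/-!
Any two distinct lines meet in one point, so the center of a class lies on no line of another
class, and no base point lies on a line joining two centers. If `g` and `h` vanish at the center of
a class and `h` also vanishes at another center, the lines of the class are therefore `g = a h`,
with `a` in a set of `m` slopes.

If a linear form `h` vanishes at all three centers, take the lines of the net through a base point
`p`; their forms are dependent and can be scaled to `g₂ = g₀ + g₁`. With respect to `h` the slopes
of the classes satisfy `S₀ + S₁ ⊆ S₂`, and `0` belongs to all of them, so `S₀ = S₁ = S₂` is closed
under addition; summing over it gives `m a = 0` for each of its elements `a`, so it is `{0}`.

Otherwise the centers form a basis, which can be scaled so that a base point is `[1 : 1 : 1]`. Now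
`S₀ * S₂ ⊆ S₁` and `1` belongs to all slope sets, so they agree with a single set of `m` nonzero
scalars closed under multiplication, and taking products shows that these are `m`-th roots of unity.
-/

open Module (Basis Dual finrank)
open Polynomial (nthRootsFinset mem_nthRootsFinset)
open scoped Finset LinearAlgebra.Projectivization Pointwise

section ClosedFinsets

@[to_additive]
lemma eq_and_eq_of_mul_subset {M : Type*} [MulOneClass M] [DecidableEq M] {S T U : Finset M}
    (hS : 1 ∈ S) (hT : 1 ∈ T) (hmul : S * T ⊆ U) (hUS : #U ≤ #S) (hUT : #U ≤ #T) :
    S = U ∧ T = U :=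
  ⟨Finset.eq_of_subset_of_card_le ((Finset.subset_mul_left S hT).trans hmul) hUS,
    Finset.eq_of_subset_of_card_le ((Finset.subset_mul_right T hS).trans hmul) hUT⟩

@[to_additive]
lemma pow_card_eq_one_of_mul_subset {M : Type*} [CommMonoid M] [DecidableEq M] {S : Finset M}
    (hreg : ∀ a ∈ S, IsRegular a) (hmul : S * S ⊆ S) {a : M} (ha : a ∈ S) : a ^ #S = 1 := by
  have hinj : Set.InjOn (a * ·) S := (hreg a ha).left.injOn
  have himage : S.image (a * ·) = S := Finset.eq_of_subset_of_card_le
    (Finset.image_subset_iff.2 fun b hb => hmul (Finset.mul_mem_mul ha hb))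
    (Finset.card_image_of_injOn hinj).ge
  have hprod : a ^ #S * ∏ b ∈ S, b = 1 * ∏ b ∈ S, b := by
    calc a ^ #S * ∏ b ∈ S, b = ∏ b ∈ S, a * b := by
          rw [Finset.prod_mul_distrib, Finset.prod_const]
      _ = ∏ b ∈ S.image (a * ·), b := (Finset.prod_image (f := id) hinj).symm
      _ = 1 * ∏ b ∈ S, b := by rw [himage, one_mul]
  have hreg_prod : IsRegular (∏ b ∈ S, b) :=
    Finset.prod_induction _ IsRegular (fun _ _ => IsRegular.mul) isRegular_one hreg
  exact hreg_prod.right hprod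

lemma eq_nthRootsFinset_of_mul_subset {R : Type*} [CommRing R] [IsDomain R] [DecidableEq R]
    {S : Finset R} (hS : S.Nonempty) (h0 : 0 ∉ S) (hmul : S * S ⊆ S) :
    S = nthRootsFinset #S (1 : R) := by
  have hreg : ∀ a ∈ S, IsRegular a := fun a ha => .of_ne_zero (ne_of_mem_of_not_mem ha h0)
  refine Finset.eq_of_subset_of_card_le (fun a ha => ?_) ?_
  · exact (mem_nthRootsFinset hS.card_pos 1).2 (pow_card_eq_one_of_mul_subset hreg hmul ha)
  · rw [Polynomial.nthRootsFinset_def]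
    exact (Multiset.toFinset_card_le _).trans (Polynomial.card_nthRoots _ _)

end ClosedFinsets

section LinearForms

variable {K V : Type*} [Field K] [AddCommGroup V] [Module K V]

lemma linearIndependent_pair_of_apply {g h : Dual K V} {v : V} (hg : g v ≠ 0) (hh : h ≠ 0)
    (hhv : h v = 0) : LinearIndependent K ![g, h] := by
  refine LinearIndependent.pair_iff.2 fun s t hst => ?_
  have hs : s = 0 := by
    simpa [hhv, hg] using LinearMap.congr_fun hst v
  subst hs
  simpa [hh] using hst

lemma mem_span_of_apply_eq_zero [FiniteDimensional K V] {ι κ : Type*} [Fintype ι] [Fintype κ]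
    {g : ι → Dual K V} {u : κ → V} (hg : LinearIndependent K g) (hu : LinearIndependent K u)
    (hcard : Fintype.card κ + Fintype.card ι = finrank K V) (hgu : ∀ i k, g i (u k) = 0)
    {f : Dual K V} (hf : ∀ k, f (u k) = 0) : f ∈ Submodule.span K (Set.range g) := by
  set W := Submodule.span K (Set.range u) with hW
  have mem_iff (φ : Dual K V) : φ ∈ W.dualAnnihilator ↔ ∀ k, φ (u k) = 0 := by
    rw [← SetLike.mem_coe, hW, Submodule.coe_dualAnnihilator_span]
    exact Set.range_subset_iff
  have hle : Submodule.span K (Set.range g) ≤ W.dualAnnihilator :=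
    Submodule.span_le.2 (Set.range_subset_iff.2 fun i => (mem_iff _).2 (hgu i))
  have hfinrank := Subspace.finrank_add_finrank_dualAnnihilator_eq W
  rw [finrank_span_eq_card hu, ← hcard, Nat.add_left_cancel_iff] at hfinrank
  rw [Submodule.eq_of_le_of_finrank_eq hle ((finrank_span_eq_card hg).trans hfinrank.symm)]
  exact (mem_iff f).2 hf

/-- The projective frame of points `[u i]` with unit point `[v]`. -/
lemma exists_basis_coord_eq_one [FiniteDimensional K V] {ι : Type*} [Fintype ι] {u : ι → V} {v : V}
    (hu : LinearIndependent K u) (hcard : Fintype.card ι = finrank K V)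
    (hv : ∀ (i : ι) (h : Dual K V), h ≠ 0 → (∀ j ≠ i, h (u j) = 0) → h v ≠ 0) :
    ∃ b : Basis ι K V, (∀ i j, b.coord j (u i) = 0 ↔ i ≠ j) ∧ ∀ i, b.coord i v = 1 := by
  classical
  let b₀ := basisOfLinearIndependentOfCardEqFinrank' u hu hcard
  have coord_u (i j : ι) : b₀.coord j (u i) = 0 ↔ i ≠ j := by
    have hui : u i = b₀ i := by simp [b₀]
    simp [hui, Finsupp.single_apply]
  have coord_v (i : ι) : IsUnit (b₀.coord i v) := by
    refine isUnit_iff_ne_zero.2 (hv i _ (fun h => ?_) fun j hj => (coord_u j i).2 hj)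
    exact (coord_u i i).1 (by simp [h]) rfl
  have coord_isUnitSMul (i : ι) (x : V) :
      (b₀.isUnitSMul coord_v).coord i x = (b₀.coord i v)⁻¹ * b₀.coord i x := by
    simp [Basis.repr_isUnitSMul, Units.smul_def]
  refine ⟨b₀.isUnitSMul coord_v, fun i j => ?_, fun i => ?_⟩
  · rw [coord_isUnitSMul, mul_eq_zero_iff_left (inv_ne_zero (coord_v j).ne_zero), coord_u]
  · rw [coord_isUnitSMul, inv_mul_cancel₀ (coord_v i).ne_zero]

end LinearForms

section Hyperplanes

variable {K V : Type*} [Field K] [AddCommGroup V] [Module K V]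

/-- The zero locus in `ℙ K V` of a linear form: a hyperplane if the form is nonzero, hence a line
when `V` has dimension `3`. -/
def projZeroLocus (f : Dual K V) : Set (ℙ K V) :=
  {p | f p.rep = 0}

/-- The member `g = a h` of the pencil of hyperplanes spanned by `g` and `h`; the member `h = 0`,
of slope `∞`, is left out. -/
def slopeLine (g h : Dual K V) (a : K) : Set (ℙ K V) :=
  {p | g p.rep = a * h p.rep}

lemma div_eq_of_mem_slopeLine {g h : Dual K V} {a : K} {p : ℙ K V} (hp : p ∈ slopeLine g h a)
    (hh : h p.rep ≠ 0) : g p.rep / h p.rep = a :=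
  (div_eq_iff hh).2 hp

lemma image_slopeLine_nthRootsFinset {m : ℕ} (hm : 0 < m) (g h : Dual K V) :
    slopeLine g h '' nthRootsFinset m (1 : K) = {L | ∃ ζ : K, ζ ^ m = 1 ∧ L = slopeLine g h ζ} := by
  ext L
  simp only [Set.mem_image, Finset.mem_coe, mem_nthRootsFinset hm, Set.mem_ofPred_eq, eq_comm]

lemma projZeroLocus_smul {t : K} (ht : t ≠ 0) (f : Dual K V) :
    projZeroLocus (t • f) = projZeroLocus f := by
  ext p
  simp [projZeroLocus, ht]

lemma projZeroLocus_eq_slopeLine {g h : Dual K V} {α : K} (hα : α ≠ 0) (β : K) :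
    projZeroLocus (α • g + β • h) = slopeLine g h (-β / α) := by
  ext p
  simp only [projZeroLocus, slopeLine, Set.mem_ofPred_eq, LinearMap.add_apply,
    LinearMap.smul_apply, smul_eq_mul]
  rw [div_mul_eq_mul_div, eq_div_iff hα, add_eq_zero_iff_eq_neg, neg_mul, mul_comm]

variable (hV : finrank K V = 3)
include hV

lemma eq_of_mem_projZeroLocus_of_mem {f f' : Dual K V} (hf : f ≠ 0) (hf' : f' ≠ 0)
    (hne : projZeroLocus f ≠ projZeroLocus f') {p q : ℙ K V} (hp : p ∈ projZeroLocus f)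
    (hp' : p ∈ projZeroLocus f') (hq : q ∈ projZeroLocus f) (hq' : q ∈ projZeroLocus f') :
    p = q := by
  have := Module.finite_of_finrank_eq_succ hV
  by_contra hpq
  have hmem : f' ∈ Submodule.span K (Set.range ![f]) :=
    mem_span_of_apply_eq_zero (u := ![p.rep, q.rep]) (by simpa using hf)
      (Projectivization.linearIndependent_pair_iff_ne.2 hpq) (by simp [hV])
      (by simp [Fin.forall_fin_two, hp.out, hq.out])
      (by simp [Fin.forall_fin_two, hp'.out, hq'.out])
  obtain ⟨t, rfl⟩ : ∃ t : K, t • f = f' := by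
    simpa [Submodule.mem_span_singleton] using hmem
  exact hne (projZeroLocus_smul (left_ne_zero_of_smul hf') f).symm

lemma exists_smul_add_smul_eq {g h f : Dual K V} (hgh : LinearIndependent K ![g, h]) {p : ℙ K V}
    (hg : g p.rep = 0) (hh : h p.rep = 0) (hf : f p.rep = 0) :
    ∃ α β : K, α • g + β • h = f := by
  have := Module.finite_of_finrank_eq_succ hV
  have hmem : f ∈ Submodule.span K (Set.range ![g, h]) :=
    mem_span_of_apply_eq_zero (u := ![p.rep]) hgh (by simpa using p.rep_nonzero) (by simp [hV])
      (by simp [Fin.forall_fin_two, hg, hh]) (by simpa using hf)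
  rw [Matrix.range_cons_cons_empty] at hmem
  exact Submodule.mem_span_pair.1 hmem

lemma exists_eq_slopeLine {g h : Dual K V} {c d : ℙ K V} (hgc : g c.rep = 0) (hgd : g d.rep ≠ 0)
    (hh : h ≠ 0) (hhc : h c.rep = 0) (hhd : h d.rep = 0) {f : Dual K V}
    (hc : c ∈ projZeroLocus f) (hd : d ∉ projZeroLocus f) :
    ∃ a : K, slopeLine g h a = projZeroLocus f := by
  obtain ⟨α, β, rfl⟩ :=
    exists_smul_add_smul_eq hV (linearIndependent_pair_of_apply hgd hh hhd) hgc hhc hc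
  have hα : α ≠ 0 := by
    rintro rfl
    exact hd (by simp [projZeroLocus, hhd])
  exact ⟨-β / α, (projZeroLocus_eq_slopeLine hα β).symm⟩

end Hyperplanes

/-- An `(ι, m)`-net in the projective plane `ℙ K V`, where `V` is meant to have dimension `3`: the
version of `IsNet` over an arbitrary field. As `X` consists of the intersection points of the lines,
its finiteness is not a separate condition. -/
structure IsPlaneNet {K V ι : Type*} [Field K] [AddCommGroup V] [Module K V] (m : ℕ)
    (A : ι → Finset (Set (ℙ K V))) (X : Set (ℙ K V)) : Prop where
  lines : ∀ i, ∀ L ∈ A i, ∃ f : Dual K V, f ≠ 0 ∧ L = projZeroLocus f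
  card_eq : ∀ i, #(A i) = m
  disjoint : ∀ i j, i ≠ j → Disjoint (A i) (A j)
  meets : ∀ i j, i ≠ j → ∀ L ∈ A i, ∀ L' ∈ A j, ∃ p ∈ X, p ∈ L ∧ p ∈ L'
  unique_through : ∀ p ∈ X, ∀ i, ∃! L, L ∈ A i ∧ p ∈ L

namespace IsPlaneNet

variable {K V ι : Type*} [Field K] [AddCommGroup V] [Module K V] {m : ℕ}
  {A : ι → Finset (Set (ℙ K V))} {X : Set (ℙ K V)}

lemma nonempty (hN : IsPlaneNet m A X) (hm : 0 < m) (i : ι) : (A i).Nonempty :=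
  Finset.card_pos.1 (by rwa [hN.card_eq])

lemma div_mem_of_coe_eq_image (hN : IsPlaneNet m A X) {i : ι} {g h : Dual K V} {S : Finset K}
    (hS : (A i : Set (Set (ℙ K V))) = slopeLine g h '' S) {p : ℙ K V} (hp : p ∈ X)
    (hhp : h p.rep ≠ 0) : g p.rep / h p.rep ∈ S := by
  obtain ⟨L, ⟨hL, hpL⟩, -⟩ := hN.unique_through p hp i
  obtain ⟨a, ha, rfl⟩ := hS.subset hL
  rwa [div_eq_of_mem_slopeLine hpL hhp]

lemma exists_mem_slopeLine (hN : IsPlaneNet m A X) {i j : ι} (hij : i ≠ j) {g h g' h' : Dual K V}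
    {S T : Finset K} (hS : (A i : Set (Set (ℙ K V))) = slopeLine g h '' S)
    (hT : (A j : Set (Set (ℙ K V))) = slopeLine g' h' '' T) {a b : K} (ha : a ∈ S) (hb : b ∈ T) :
    ∃ p ∈ X, p ∈ slopeLine g h a ∧ p ∈ slopeLine g' h' b :=
  hN.meets i j hij _ (hS.superset ⟨a, ha, rfl⟩) _ (hT.superset ⟨b, hb, rfl⟩)

section Pencils

variable {c : ι → ℙ K V} {i j : ι} (hN : IsPlaneNet m A X) (hV : finrank K V = 3) (hm : 1 < m)
  (hc : ∀ i, ∀ L ∈ A i, c i ∈ L) (hij : i ≠ j)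
include hN hV hm hc hij

lemma center_notMem {L : Set (ℙ K V)} (hL : L ∈ A i) : c j ∉ L := by
  intro hcL
  obtain ⟨M, hM, M', hM', hMM'⟩ := Finset.one_lt_card.1 (hm.trans_eq (hN.card_eq j).symm)
  obtain ⟨p, hpX, hpL, hpM⟩ := hN.meets i j hij L hL M hM
  have hLM : L ≠ M := fun h => Finset.disjoint_left.1 (hN.disjoint i j hij) hL (h ▸ hM)
  have hcM : c j ∈ M := hc j M hM
  obtain ⟨f, hf, rfl⟩ := hN.lines i L hL
  obtain ⟨f', hf', rfl⟩ := hN.lines j M hM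
  obtain rfl : p = c j := eq_of_mem_projZeroLocus_of_mem hV hf hf' hLM hpL hpM hcL hcM
  exact hMM' ((hN.unique_through _ hpX j).unique ⟨hM, hpM⟩ ⟨hM', hc j M' hM'⟩)

lemma base_apply_ne_zero {h : Dual K V} (hh : h ≠ 0) (hi : h (c i).rep = 0) (hj : h (c j).rep = 0)
    {p : ℙ K V} (hp : p ∈ X) : h p.rep ≠ 0 := by
  intro hhp
  obtain ⟨L, ⟨hL, hpL⟩, -⟩ := hN.unique_through p hp i
  obtain ⟨L', ⟨hL', hpL'⟩, -⟩ := hN.unique_through p hp j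
  have hcL : c i ∈ L := hc i L hL
  have hcL' : c j ∉ L := hN.center_notMem hV hm hc hij hL
  obtain ⟨f, hf, rfl⟩ := hN.lines i L hL
  have hne : projZeroLocus f ≠ projZeroLocus h := fun hfh => hcL' (hfh.superset hj)
  obtain rfl : p = c i := eq_of_mem_projZeroLocus_of_mem hV hf hh hne hpL hhp hcL hi
  exact hN.center_notMem hV hm hc hij.symm hL' hpL'

lemma exists_slopes {g h : Dual K V} (hgi : g (c i).rep = 0) (hgj : g (c j).rep ≠ 0) (hh : h ≠ 0)
    (hhi : h (c i).rep = 0) (hhj : h (c j).rep = 0) :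
    ∃ S : Finset K, #S = m ∧ (A i : Set (Set (ℙ K V))) = slopeLine g h '' S := by
  classical
  have hsurj : Set.SurjOn (slopeLine g h) Set.univ (A i) := by
    intro L hL
    have hcL : c i ∈ L := hc i L hL
    have hcL' : c j ∉ L := hN.center_notMem hV hm hc hij hL
    obtain ⟨f, -, rfl⟩ := hN.lines i L hL
    obtain ⟨a, ha⟩ := exists_eq_slopeLine hV hgi hgj hh hhi hhj hcL hcL'
    exact ⟨a, Set.mem_univ a, ha⟩
  obtain ⟨S, -, hinj, hS⟩ := Finset.exists_subset_injOn_image_eq_of_surjOn _ _ hsurj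
  refine ⟨S, ?_, ?_⟩
  · rw [← Finset.card_image_of_injOn hinj, hS, hN.card_eq]
  · rw [← hS, Finset.coe_image]

end Pencils

section ThreePencils

variable {A : Fin 3 → Finset (Set (ℙ K V))} {c : Fin 3 → ℙ K V} (hN : IsPlaneNet m A X)
  (hV : finrank K V = 3) (hm : 1 < m) (hc : ∀ i, ∀ L ∈ A i, c i ∈ L)
include hN hV hm hc

lemma exists_forms_add_eq : ∃ g : Fin 3 → Dual K V, g 0 + g 1 = g 2 ∧
    (∀ i, projZeroLocus (g i) ∈ A i) ∧ ∃ p ∈ X, ∀ i, g i p.rep = 0 := by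
  obtain ⟨L₀, hL₀⟩ := hN.nonempty (by lia) 0
  obtain ⟨L₁, hL₁⟩ := hN.nonempty (by lia) 1
  obtain ⟨p, hpX, hp₀, hp₁⟩ := hN.meets 0 1 (by decide) L₀ hL₀ L₁ hL₁
  obtain ⟨L₂, ⟨hL₂, hp₂⟩, -⟩ := hN.unique_through p hpX 2
  obtain ⟨f₀, -, rfl⟩ := hN.lines 0 L₀ hL₀
  obtain ⟨f₁, hf₁, rfl⟩ := hN.lines 1 L₁ hL₁
  obtain ⟨f₂, -, rfl⟩ := hN.lines 2 L₂ hL₂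
  have hf₀c₁ : f₀ (c 1).rep ≠ 0 := hN.center_notMem hV hm hc (by decide) hL₀
  have hf₁c₁ : f₁ (c 1).rep = 0 := hc 1 _ hL₁
  obtain ⟨α, β, hf⟩ := exists_smul_add_smul_eq hV
    (linearIndependent_pair_of_apply hf₀c₁ hf₁ hf₁c₁) hp₀ hp₁ hp₂
  have hα : α ≠ 0 := by
    rintro rfl
    refine hN.center_notMem hV hm hc (show (2 : Fin 3) ≠ 1 by decide) hL₂ ?_
    simp [projZeroLocus, ← hf, hf₁c₁]
  have hβ : β ≠ 0 := by
    rintro rfl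
    have hf₀c₀ : f₀ (c 0).rep = 0 := hc 0 _ hL₀
    refine hN.center_notMem hV hm hc (show (2 : Fin 3) ≠ 0 by decide) hL₂ ?_
    simp [projZeroLocus, ← hf, hf₀c₀]
  refine ⟨![α • f₀, β • f₁, f₂], hf, ?_, p, hpX, ?_⟩
  · simp [Fin.forall_fin_succ, projZeroLocus_smul, hα, hβ, hL₀, hL₁, hL₂]
  · simp [Fin.forall_fin_succ, hp₀.out, hp₁.out, hp₂.out]

lemma exists_center_apply_ne_zero (hmK : (m : K) ≠ 0) {h : Dual K V} (hh : h ≠ 0) :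
    ∃ i, h (c i).rep ≠ 0 := by
  classical
  by_contra! hhc
  obtain ⟨g, hg, hgA, p, hpX, hgp⟩ := hN.exists_forms_add_eq hV hm hc
  have hhX {q : ℙ K V} (hq : q ∈ X) : h q.rep ≠ 0 :=
    hN.base_apply_ne_zero hV hm hc (show (0 : Fin 3) ≠ 1 by decide) hh (hhc 0) (hhc 1) hq
  have slopes (i : Fin 3) :
      ∃ S : Finset K, #S = m ∧ (A i : Set (Set (ℙ K V))) = slopeLine (g i) h '' S := by
    obtain ⟨j, hij⟩ := exists_ne i
    exact hN.exists_slopes hV hm hc hij.symm (hc i _ (hgA i))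
      (hN.center_notMem hV hm hc hij.symm (hgA i)) hh (hhc i) (hhc j)
  choose S hcard hS using slopes
  have zero_mem (i : Fin 3) : 0 ∈ S i := by
    simpa [hgp] using hN.div_mem_of_coe_eq_image (hS i) hpX (hhX hpX)
  have hadd : S 0 + S 1 ⊆ S 2 := by
    refine Finset.add_subset_iff.2 fun a ha b hb => ?_
    obtain ⟨q, hqX, hqa, hqb⟩ := hN.exists_mem_slopeLine (by decide) (hS 0) (hS 1) ha hb
    rw [← div_eq_of_mem_slopeLine hqa (hhX hqX), ← div_eq_of_mem_slopeLine hqb (hhX hqX),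
      ← add_div, ← LinearMap.add_apply, hg]
    exact hN.div_mem_of_coe_eq_image (hS 2) hqX (hhX hqX)
  obtain ⟨h02, h12⟩ := eq_and_eq_of_add_subset (zero_mem 0) (zero_mem 1) hadd
    (by simp [hcard]) (by simp [hcard])
  rw [h02, h12] at hadd
  have eq_zero {a : K} (ha : a ∈ S 2) : a = 0 := by
    have := nsmul_card_eq_zero_of_add_subset (fun a _ => IsAddRegular.all a) hadd ha
    simpa [hcard, hmK] using this
  have hle : #(S 2) ≤ 1 := Finset.card_le_one.2 fun a ha b hb => by rw [eq_zero ha, eq_zero hb]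
  exact hm.not_ge (hcard 2 ▸ hle)

lemma linearIndependent_centers (hmK : (m : K) ≠ 0) :
    LinearIndependent K fun i => (c i).rep := by
  refine linearIndependent_of_top_le_span_of_card_eq_finrank (not_lt_top_iff.1 fun hlt => ?_).ge
    (by simp [hV])
  obtain ⟨h, hh, hker⟩ := Submodule.exists_le_ker_of_lt_top _ hlt
  obtain ⟨i, hi⟩ := hN.exists_center_apply_ne_zero hV hm hc hmK hh
  exact hi (hker (Submodule.subset_span ⟨i, rfl⟩))

/-- The indices are reversed to match the coordinates of the classification: the lines of the class
`A i.rev` do not involve the `i`-th coordinate. -/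
lemma exists_coordinate_frame (hli : LinearIndependent K fun i => (c i).rep) :
    ∃ b : Basis (Fin 3) K V,
      (∀ i j, b.coord j (c i.rev).rep = 0 ↔ i ≠ j) ∧ (∀ q ∈ X, ∀ i, b.coord i q.rep ≠ 0) ∧
      ∃ p ∈ X, ∀ i, b.coord i p.rep = 1 := by
  have := Module.finite_of_finrank_eq_succ hV
  have exists_two_others : ∀ i : Fin 3, ∃ j k, j ≠ i ∧ k ≠ i ∧ j ≠ k := by decide
  have hX {q : ℙ K V} (hq : q ∈ X) (i : Fin 3) (h : Dual K V) (hh : h ≠ 0)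
      (hhc : ∀ j ≠ i, h (c j.rev).rep = 0) : h q.rep ≠ 0 := by
    obtain ⟨j, k, hj, hk, hjk⟩ := exists_two_others i
    exact hN.base_apply_ne_zero hV hm hc (Fin.rev_injective.ne hjk) hh (hhc j hj) (hhc k hk) hq
  obtain ⟨L₀, hL₀⟩ := hN.nonempty (by lia) 0
  obtain ⟨L₁, hL₁⟩ := hN.nonempty (by lia) 1
  obtain ⟨p, hpX, -⟩ := hN.meets 0 1 (by decide) L₀ hL₀ L₁ hL₁
  obtain ⟨b, hb, hbp⟩ := exists_basis_coord_eq_one (hli.comp _ Fin.rev_injective) (by simp [hV])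
    (hX hpX)
  refine ⟨b, hb, fun q hq i => hX hq i _ (fun h => ?_) fun j hj => (hb j i).2 hj, p, hpX, hbp⟩
  exact (hb i i).1 (by simp [h]) rfl

lemma exists_basis_coe_eq_image_nthRootsFinset (hli : LinearIndependent K fun i => (c i).rep) :
    ∃ b : Basis (Fin 3) K V,
      (A 0 : Set (Set (ℙ K V))) =
        slopeLine (b.coord 0) (b.coord 1) '' nthRootsFinset m (1 : K) ∧
      (A 1 : Set (Set (ℙ K V))) =
        slopeLine (b.coord 0) (b.coord 2) '' nthRootsFinset m (1 : K) ∧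
      (A 2 : Set (Set (ℙ K V))) =
        slopeLine (b.coord 1) (b.coord 2) '' nthRootsFinset m (1 : K) := by
  classical
  obtain ⟨b, hbc, hbX, p, hpX, hbp⟩ := hN.exists_coordinate_frame hV hm hc hli
  have slopes {i j k : Fin 3} (hij : i ≠ j) (hik : i ≠ k) (hjk : j ≠ k) : ∃ S : Finset K,
      #S = m ∧ (A i.rev : Set (Set (ℙ K V))) = slopeLine (b.coord j) (b.coord k) '' S :=
    hN.exists_slopes hV hm hc (Fin.rev_injective.ne hij) ((hbc i j).2 hij)
      (fun h => (hbc j j).1 h rfl) (fun h => hbX p hpX k (by simp [h])) ((hbc i k).2 hik)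
      ((hbc j k).2 hjk)
  obtain ⟨S₀, hcard₀, hS₀⟩ := slopes (i := 2) (j := 0) (k := 1) (by decide) (by decide) (by decide)
  obtain ⟨S₁, hcard₁, hS₁⟩ := slopes (i := 1) (j := 0) (k := 2) (by decide) (by decide) (by decide)
  obtain ⟨S₂, hcard₂, hS₂⟩ := slopes (i := 0) (j := 1) (k := 2) (by decide) (by decide) (by decide)
  have one_mem {i j k : Fin 3} {S : Finset K}
      (hS : (A i : Set (Set (ℙ K V))) = slopeLine (b.coord j) (b.coord k) '' S) : 1 ∈ S := by
    simpa only [hbp, div_one] using hN.div_mem_of_coe_eq_image hS hpX (hbX p hpX k)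
  have hmul : S₀ * S₂ ⊆ S₁ := by
    refine Finset.mul_subset_iff.2 fun a ha e he => ?_
    obtain ⟨q, hqX, hqa, hqe⟩ := hN.exists_mem_slopeLine (by decide) hS₀ hS₂ ha he
    rw [← div_eq_of_mem_slopeLine hqa (hbX q hqX 1), ← div_eq_of_mem_slopeLine hqe (hbX q hqX 2),
      div_mul_div_cancel₀ (hbX q hqX 1)]
    exact hN.div_mem_of_coe_eq_image hS₁ hqX (hbX q hqX 2)
  have zero_notMem : 0 ∉ S₀ := by
    intro h0
    obtain ⟨q, hqX, hq, -⟩ := hN.exists_mem_slopeLine (by decide) hS₀ hS₂ h0 (one_mem hS₂)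
    exact hbX q hqX 0 (hq.out.trans (zero_mul _))
  obtain ⟨rfl, rfl⟩ := eq_and_eq_of_mul_subset (one_mem hS₀) (one_mem hS₂) hmul
    (by rw [hcard₀, hcard₁]) (by rw [hcard₂, hcard₁])
  have hroots := eq_nthRootsFinset_of_mul_subset ⟨1, one_mem hS₀⟩ zero_notMem hmul
  rw [hcard₀] at hroots
  rw [hroots] at hS₀ hS₁ hS₂
  exact ⟨b, hS₀, hS₁, hS₂⟩

end ThreePencils

end IsPlaneNet

theorem net_three_pencils_classification_general {K V : Type*} [Field K] [AddCommGroup V]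
    [Module K V] (hV : finrank K V = 3) {m : ℕ} {A : Fin 3 → Finset (Set (ℙ K V))}
    {X : Set (ℙ K V)} (hm : 1 < m) (hmK : (m : K) ≠ 0) (hN : IsPlaneNet m A X)
    (hpen : ∀ i, ∃ p : ℙ K V, ∀ L ∈ A i, p ∈ L) :
    ∃ T : V ≃ₗ[K] (Fin 3 → K),
      (A 0 : Set (Set (ℙ K V))) =
        {L | ∃ ζ : K, ζ ^ m = 1 ∧ L = {p : ℙ K V | T p.rep 0 = ζ * T p.rep 1}} ∧
      (A 1 : Set (Set (ℙ K V))) =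
        {L | ∃ ζ : K, ζ ^ m = 1 ∧ L = {p : ℙ K V | T p.rep 0 = ζ * T p.rep 2}} ∧
      (A 2 : Set (Set (ℙ K V))) =
        {L | ∃ ζ : K, ζ ^ m = 1 ∧ L = {p : ℙ K V | T p.rep 1 = ζ * T p.rep 2}} := by
  choose c hc using hpen
  obtain ⟨b, h₀, h₁, h₂⟩ := hN.exists_basis_coe_eq_image_nthRootsFinset hV hm hc
    (hN.linearIndependent_centers hV hm hc hmK)
  rw [image_slopeLine_nthRootsFinset (by lia)] at h₀ h₁ h₂
  exact ⟨b.equivFun, h₀, h₁, h₂⟩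

/-- A nontrivial (3,m)-net all of whose classes are pencils is, in suitable
homogeneous coordinates given by a linear automorphism `T` of ℂ³, the net whose classes
consist of the components of `x^m - y^m = 0`, `x^m - z^m = 0` and `y^m - z^m = 0`,
i.e. the lines `x = ζy`, `x = ζz`, `y = ζz` with `ζ^m = 1`.  In particular such a net is
projectively unique and realizes ℤ/mℤ. -/
theorem net_three_pencils_classification (m : ℕ) (A : Fin 3 → Finset (Set P2)) (X : Set P2)
    (hm : 1 < m) (hN : IsNet 3 m A X) (hpen : ∀ i, IsPencil (A i)) :
    ∃ T : (Fin 3 → ℂ) ≃ₗ[ℂ] (Fin 3 → ℂ),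
      (↑(A 0) : Set (Set P2)) =
        {L | ∃ ζ : ℂ, ζ ^ m = 1 ∧ L = {p : P2 | T p.rep 0 = ζ * T p.rep 1}} ∧
      (↑(A 1) : Set (Set P2)) =
        {L | ∃ ζ : ℂ, ζ ^ m = 1 ∧ L = {p : P2 | T p.rep 0 = ζ * T p.rep 2}} ∧
      (↑(A 2) : Set (Set P2)) =
        {L | ∃ ζ : ℂ, ζ ^ m = 1 ∧ L = {p : P2 | T p.rep 1 = ζ * T p.rep 2}} :=
  net_three_pencils_classification_general (by simp) hm (Nat.cast_ne_zero.2 (by lia))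
    ⟨hN.lines, hN.card_eq, hN.disj, hN.meets, hN.unique_through⟩ hpen
end

section
/- Every finite subgroup of a two-dimensional complex torus can be realized by a 3-net in ℙ²(ℂ): for all positive integers a and b, there exist injective maps p₁, p₂, p₃ : ℤ/aℤ × ℤ/bℤ → ℙ²(ℂ) with pairwise disjoint images such that for all x,y,z ∈ ℤ/aℤ × ℤ/bℤ the points p₁(x), p₂(y), p₃(z) are collinear if and only if x+y+z = 0. -/
/-- Three points of ℙ²(ℂ) are collinear if representative vectors in ℂ³ span a linear
subspace of dimension at most 2. -/
def Collin (p q r : P2) : Prop :=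
  Module.finrank ℂ (Submodule.span ℂ {p.rep, q.rep, r.rep} : Submodule ℂ (Fin 3 → ℂ)) ≤ 2

/-- A realization of a finite abelian group `H` by a 3-net in ℙ²(ℂ), stated dually in
terms of the points dual to the lines of the net: three injective maps `H → ℙ²(ℂ)` with
pairwise disjoint images such that `p₁ x`, `p₂ y`, `p₃ z` are collinear iff
`x + y + z = 0`. -/
def Realizes {H : Type} [AddCommGroup H] (p₁ p₂ p₃ : H → P2) : Prop :=
  Function.Injective p₁ ∧ Function.Injective p₂ ∧ Function.Injective p₃ ∧
  Disjoint (Set.range p₁) (Set.range p₂) ∧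
  Disjoint (Set.range p₁) (Set.range p₃) ∧
  Disjoint (Set.range p₂) (Set.range p₃) ∧
  ∀ x y z : H, Collin (p₁ x) (p₂ y) (p₃ z) ↔ x + y + z = 0

/-!
Weierstrass' cubic parametrization realizes the subgroups of an elliptic curve: distinct points of
a smooth cubic are collinear exactly when they sum to zero. Here the cubic is hidden behind an
entire function `σ` satisfying the three-term relation: points of `ℂ` are sent to the vectors
`(σ (u - a k + s) / σ (u - a k))` for fixed poles `a 0, a 1, a 2`, and Frobenius' determinant
formula, a consequence of the three-term relation and the Desnanot–Jacobi identity, shows that three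
such vectors are dependent exactly when `σ` vanishes at the sum of the parameters, suitably shifted.

The three-term relation forces the zeros of `σ` to form a subgroup, hence a lattice if `σ` vanishes
at two real-independent points, as the odd theta function does. The quotient of `ℂ` by this lattice
is a real two-torus, which contains `H`, and even `H × ℤ` because it is uncountable. Three cosets
of `H` in `H × ℤ` carry the three classes of points, and the remaining integers provide the poles.
-/

/-- The three-term relation of Weierstrass and Fay, characteristic of sigma functions of (possibly
degenerate) elliptic curves. It is stated with the shift `s` as a free variable, so that it computes
the `2 × 2` minors of `frobeniusVector`. -/
def ThreeTermRelation {G K : Type*} [AddCommGroup G] [CommRing K] (σ : G → K) : Prop :=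
  ∀ s x y a b : G,
    σ (x - a + s) * σ (y - b + s) * σ (x - b) * σ (y - a)
      - σ (x - b + s) * σ (y - a + s) * σ (x - a) * σ (y - b)
    = σ s * σ (s + x + y - a - b) * σ (x - y) * σ (b - a)

/-- The vector of values at `u` of the functions `u ↦ σ (u - a k + s) / σ (u - a k)` with
poles at the `a k`; for the Weierstrass sigma function it maps the elliptic curve into projective
space. -/
def frobeniusVector {G K ι : Type*} [AddCommGroup G] [Field K] (σ : G → K) (s : G) (a : ι → G)
    (u : G) : ι → K :=
  fun k => σ (u - a k + s) / σ (u - a k)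

/-- This is the Plücker relation for the `2 × 2` minors `σ (u + v) * σ (u - v)` of the vectors
`(A u, B u)`. -/
theorem threeTermRelation_of_factorization {K : Type*} [Field K] [NeZero (2 : K)] {σ A B : K → K}
    (h : ∀ u v, σ (u + v) * σ (u - v) = B u * A v - A u * B v) : ThreeTermRelation σ := by
  intro s x y a b
  set p₁ := (x + y - a - b) / 2 + s
  set p₂ := (x + y - a - b) / 2
  set p₃ := (x - y - a + b) / 2
  set p₄ := (x - y + a - b) / 2
  have two_ne_zero : (2 : K) ≠ 0 := NeZero.ne 2
  have h₁₃ : σ (x - a + s) * σ (y - b + s) = B p₁ * A p₃ - A p₁ * B p₃ := by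
    rw [← h]; congr 2 <;> grind
  have h₂₄ : σ (x - b) * σ (y - a) = B p₂ * A p₄ - A p₂ * B p₄ := by
    rw [← h]; congr 2 <;> grind
  have h₁₄ : σ (x - b + s) * σ (y - a + s) = B p₁ * A p₄ - A p₁ * B p₄ := by
    rw [← h]; congr 2 <;> grind
  have h₂₃ : σ (x - a) * σ (y - b) = B p₂ * A p₃ - A p₂ * B p₃ := by
    rw [← h]; congr 2 <;> grind
  have h₁₂ : σ (s + x + y - a - b) * σ s = B p₁ * A p₂ - A p₁ * B p₂ := by
    rw [← h]; congr 2 <;> grind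
  have h₃₄ : σ (x - y) * σ (b - a) = B p₃ * A p₄ - A p₃ * B p₄ := by
    rw [← h]; congr 2 <;> grind
  linear_combination (σ (x - b) * σ (y - a)) * h₁₃ + (B p₁ * A p₃ - A p₁ * B p₃) * h₂₄
    - (σ (x - a) * σ (y - b)) * h₁₄ - (B p₁ * A p₄ - A p₁ * B p₄) * h₂₃
    - (σ (x - y) * σ (b - a)) * h₁₂ - (B p₁ * A p₂ - A p₁ * B p₂) * h₃₄

/-- The Desnanot–Jacobi identity. -/
theorem det_fin_three_mul_apply_one_one {R : Type*} [CommRing R] (M : Matrix (Fin 3) (Fin 3) R) :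
    M.det * M 1 1 =
      (M 0 0 * M 1 1 - M 0 1 * M 1 0) * (M 1 1 * M 2 2 - M 1 2 * M 2 1)
        - (M 0 1 * M 1 2 - M 0 2 * M 1 1) * (M 1 0 * M 2 1 - M 1 1 * M 2 0) := by
  rw [Matrix.det_fin_three]
  ring

namespace ThreeTermRelation

variable {G K : Type*} [AddCommGroup G] [Field K] {σ : G → K}

theorem frobeniusVector_minor {ι : Type*} (hσ : ThreeTermRelation σ) (s : G) (a : ι → G)
    (x y : G) (i j : ι) (hxi : σ (x - a i) ≠ 0) (hxj : σ (x - a j) ≠ 0)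
    (hyi : σ (y - a i) ≠ 0) (hyj : σ (y - a j) ≠ 0) :
    frobeniusVector σ s a x i * frobeniusVector σ s a y j
        - frobeniusVector σ s a x j * frobeniusVector σ s a y i =
      σ s * σ (s + x + y - a i - a j) * σ (x - y) * σ (a j - a i) /
        (σ (x - a i) * σ (x - a j) * σ (y - a i) * σ (y - a j)) := by
  rw [← hσ s x y (a i) (a j)]
  unfold frobeniusVector
  field_simp

/-- Frobenius' determinant formula of order three. -/
theorem det_frobeniusVector (hσ : ThreeTermRelation σ) (s : G) (a x : Fin 3 → G)
    (hxa : ∀ i j, σ (x i - a j) ≠ 0) (hmid : σ (x 1 - a 1 + s) ≠ 0) :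
    (Matrix.of fun i => frobeniusVector σ s a (x i)).det =
      σ s ^ 2 * σ (s + ∑ i, x i - ∑ i, a i) *
        (∏ i, ∏ j ∈ Finset.Ioi i, σ (x i - x j) * σ (a j - a i)) / ∏ i, ∏ j, σ (x i - a j) := by
  set M := Matrix.of fun i => frobeniusVector σ s a (x i)
  have minor (i j k l : Fin 3) : M i k * M j l - M i l * M j k = _ :=
    hσ.frobeniusVector_minor s a (x i) (x j) k l (hxa i k) (hxa i l) (hxa j k) (hxa j l)
  have middle : M 1 1 = σ (x 1 - a 1 + s) / σ (x 1 - a 1) := rfl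
  have middle_ne_zero : M 1 1 ≠ 0 := by rw [middle]; exact div_ne_zero hmid (hxa 1 1)
  have corners :
      σ (s + x 0 + x 1 - a 0 - a 1) * σ (s + x 1 + x 2 - a 1 - a 2) * σ (x 0 - a 2) * σ (x 2 - a 0)
        - σ (s + x 0 + x 1 - a 1 - a 2) * σ (s + x 1 + x 2 - a 0 - a 1) * σ (x 0 - a 0)
          * σ (x 2 - a 2) =
      σ (x 1 - a 1 + s) * σ (s + ∑ i, x i - ∑ i, a i) * σ (x 0 - x 2) * σ (a 2 - a 0) := by
    simp only [Fin.sum_univ_three]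
    convert hσ (x 1 - a 1 + s) (x 0) (x 2) (a 0) (a 2) using 5 <;> first | abel1 | (congr 1; abel1)
  apply mul_right_cancel₀ middle_ne_zero
  rw [det_fin_three_mul_apply_one_one, minor, minor, minor, minor, middle]
  simp only [Fin.prod_univ_three, show Finset.Ioi (0 : Fin 3) = {1, 2} from rfl,
    show Finset.Ioi (1 : Fin 3) = {2} from rfl, show Finset.Ioi (2 : Fin 3) = ∅ from rfl,
    Finset.prod_pair (show (1 : Fin 3) ≠ 2 by decide), Finset.prod_singleton, Finset.prod_empty]
  field_simp [hxa]
  linear_combination (σ s ^ 2 * σ (x 0 - x 1) * σ (a 1 - a 0) * σ (x 1 - x 2) * σ (a 2 - a 1))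
    * corners

theorem det_frobeniusVector_eq_zero_iff (hσ : ThreeTermRelation σ) (s : G) (a x : Fin 3 → G)
    (hs : σ s ≠ 0) (hxa : ∀ i j, σ (x i - a j) ≠ 0) (hmid : σ (x 1 - a 1 + s) ≠ 0)
    (hx : ∀ i j, i < j → σ (x i - x j) ≠ 0) (ha : ∀ i j, i < j → σ (a j - a i) ≠ 0) :
    (Matrix.of fun i => frobeniusVector σ s a (x i)).det = 0 ↔
      σ (s + ∑ i, x i - ∑ i, a i) = 0 := by
  have hdenom : ∏ i, ∏ j, σ (x i - a j) ≠ 0 :=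
    Finset.prod_ne_zero_iff.2 fun i _ => Finset.prod_ne_zero_iff.2 fun j _ => hxa i j
  have hvandermonde : ∏ i, ∏ j ∈ Finset.Ioi i, σ (x i - x j) * σ (a j - a i) ≠ 0 :=
    Finset.prod_ne_zero_iff.2 fun i _ => Finset.prod_ne_zero_iff.2 fun j hj =>
      mul_ne_zero (hx i j (Finset.mem_Ioi.1 hj)) (ha i j (Finset.mem_Ioi.1 hj))
  simp [hσ.det_frobeniusVector s a x hxa hmid, hs, hdenom, hvandermonde]

theorem factor_eq_zero_of_mk_frobeniusVector_eq {ι : Type*} (hσ : ThreeTermRelation σ) (s : G)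
    (a : ι → G) (x y : G) (i j : ι) (hxi : σ (x - a i) ≠ 0) (hxj : σ (x - a j) ≠ 0)
    (hyi : σ (y - a i) ≠ 0) (hyj : σ (y - a j) ≠ 0)
    (hx : frobeniusVector σ s a x ≠ 0) (hy : frobeniusVector σ s a y ≠ 0)
    (hxy : Projectivization.mk K _ hx = Projectivization.mk K _ hy) :
    σ s * σ (s + x + y - a i - a j) * σ (x - y) * σ (a j - a i) = 0 := by
  obtain ⟨c, hc⟩ := (Projectivization.mk_eq_mk_iff' K _ _ hx hy).1 hxy
  have hminor := hσ.frobeniusVector_minor s a x y i j hxi hxj hyi hyj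
  have hproportional : frobeniusVector σ s a x i * frobeniusVector σ s a y j
      - frobeniusVector σ s a x j * frobeniusVector σ s a y i = 0 := by
    simp only [← hc, Pi.smul_apply, smul_eq_mul]
    ring
  rw [hproportional, eq_comm, div_eq_zero_iff] at hminor
  exact hminor.resolve_right (by simp [*])

end ThreeTermRelation

namespace ThreeTermRelation

variable {G K : Type*} [AddCommGroup G] [CommRing K] [NoZeroDivisors K] {σ : G → K}

theorem apply_zero (hσ : ThreeTermRelation σ) (hshift : ∀ c, ∃ s, σ s ≠ 0 ∧ σ (s + c) ≠ 0) :
    σ 0 = 0 := by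
  obtain ⟨d, hd, -⟩ := hshift 0
  obtain ⟨s, hs, hsd⟩ := hshift (-d)
  have hproduct : σ s * σ (s - d) * σ 0 * σ d = 0 := by
    have h := hσ s 0 0 0 d
    simp only [sub_zero, zero_add, add_zero, sub_self, zero_sub] at h
    rw [← h]
    ring
  simpa [hs, hd, ← sub_eq_add_neg, sub_eq_add_neg s d ▸ hsd] using hproduct

theorem apply_sub_eq_zero (hσ : ThreeTermRelation σ)
    (hshift : ∀ c, ∃ s, σ s ≠ 0 ∧ σ (s + c) ≠ 0) {t w : G} (ht : σ t = 0) (hw : σ w = 0) :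
    σ (t - w) = 0 := by
  obtain ⟨y, hy, -⟩ := hshift 0
  obtain ⟨s, hs, hsy⟩ := hshift (-y + t + w)
  have hproduct : σ s * σ (s + (-y + t + w)) * σ y * σ (t - w) = 0 := by
    have h := hσ s 0 (-y) (-t) (-w)
    simp only [zero_sub, neg_neg, ht, hw, mul_zero, zero_mul, sub_zero, add_zero] at h
    rw [h, show s + (-y + t + w) = s + -y - -t - -w by abel, show t - w = -w - -t by abel]
  simpa [hs, hy, hsy] using hproduct

/-- The zeros of a solution of the three-term relation, as a subgroup. The hypothesis `hshift`
says that the complement of the zeros meets each of its translates, as it does for a nonzero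
analytic function. -/
def zeros (hσ : ThreeTermRelation σ) (hshift : ∀ c, ∃ s, σ s ≠ 0 ∧ σ (s + c) ≠ 0) :
    AddSubgroup G :=
  AddSubgroup.ofSub {g | σ g = 0} ⟨0, hσ.apply_zero hshift⟩ fun t ht w hw => by
    simpa [← sub_eq_add_neg] using hσ.apply_sub_eq_zero hshift ht hw

end ThreeTermRelation

theorem exists_ne_zero_and_add_ne_zero {σ : ℂ → ℂ} (hσ : Differentiable ℂ σ) (hne : ∃ z, σ z ≠ 0)
    (c : ℂ) : ∃ s, σ s ≠ 0 ∧ σ (s + c) ≠ 0 := by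
  by_contra! hzero
  have hmul : ∀ s ∈ Set.univ, σ s * σ (s + c) = 0 := fun s _ => by
    by_cases hs : σ s = 0 <;> simp [hs, hzero]
  obtain ⟨z, hz⟩ := hne
  rcases AnalyticOnNhd.eq_zero_or_eq_zero_of_mul_eq_zero
    (hσ.differentiableOn.analyticOnNhd isOpen_univ)
    ((hσ.comp (differentiable_id.add_const c)).differentiableOn.analyticOnNhd isOpen_univ)
    hmul isPreconnected_univ with h | h
  · exact hz (h z trivial)
  · exact hz (by simpa using h (z - c) trivial)

theorem collin_mk_iff_det_eq_zero (v : Fin 3 → Fin 3 → ℂ) (hv : ∀ i, v i ≠ 0) :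
    Collin (.mk ℂ (v 0) (hv 0)) (.mk ℂ (v 1) (hv 1)) (.mk ℂ (v 2) (hv 2)) ↔
      (Matrix.of v).det = 0 := by
  choose c hc using fun i => Projectivization.exists_smul_eq_mk_rep ℂ (v i) (hv i)
  have hspan : ({(Projectivization.mk ℂ (v 0) (hv 0)).rep, (Projectivization.mk ℂ (v 1) (hv 1)).rep,
      (Projectivization.mk ℂ (v 2) (hv 2)).rep} : Set (Fin 3 → ℂ)) = Set.range (c • v) := by
    ext w
    simp [Fin.exists_fin_succ, ← hc, eq_comm]
  have hindep : LinearIndependent ℂ (c • v) ↔ (Matrix.of v).det ≠ 0 := by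
    rw [LinearIndependent.units_smul_iff, ← isUnit_iff_ne_zero, ← Matrix.isUnit_iff_isUnit_det]
    exact Matrix.linearIndependent_rows_iff_isUnit (A := Matrix.of v)
  rw [Collin, hspan, ← not_iff_not, ← ne_eq (Matrix.det _), ← hindep,
    linearIndependent_iff_card_le_finrank_span, Fintype.card_fin, Set.finrank, not_le,
    Nat.lt_iff_add_one_le]

theorem realizes_of_injective {H : Type} [AddCommGroup H] (p : Fin 3 → H → P2)
    (hp : Function.Injective (Function.uncurry p))
    (hcollin : ∀ x y z, Collin (p 0 x) (p 1 y) (p 2 z) ↔ x + y + z = 0) :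
    Realizes (p 0) (p 1) (p 2) := by
  have hp_iff (i j : Fin 3) (x y : H) : p i x = p j y ↔ i = j ∧ x = y := by
    simpa using hp.eq_iff (a := (i, x)) (b := (j, y))
  simp [Realizes, Function.Injective, Set.disjoint_range_iff, hp_iff, hcollin]

theorem ThreeTermRelation.exists_realizes_of_sum_eq_zero_iff {G : Type*} [AddCommGroup G]
    {σ : G → ℂ} (hσ : ThreeTermRelation σ) {H : Type} [AddCommGroup H] (s : G) (a : Fin 3 → G)
    (u : Fin 3 → H → G) (hs : σ s ≠ 0) (ha : ∀ i j, i < j → σ (a j - a i) ≠ 0)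
    (hua : ∀ i h k, σ (u i h - a k) ≠ 0) (huas : ∀ i h k, σ (u i h - a k + s) ≠ 0)
    (huu : ∀ i j h h', σ (u i h - u j h') = 0 → i = j ∧ h = h')
    (hsuu : ∀ i j h h', σ (s + u i h + u j h' - a 0 - a 1) ≠ 0)
    (hsum : ∀ x y z, σ (s + (u 0 x + u 1 y + u 2 z) - ∑ k, a k) = 0 ↔ x + y + z = 0) :
    ∃ p₁ p₂ p₃ : H → P2, Realizes p₁ p₂ p₃ := by
  have hne (i : Fin 3) (h : H) : frobeniusVector σ s a (u i h) ≠ 0 := fun h0 =>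
    div_ne_zero (huas i h 0) (hua i h 0) (congrFun h0 0)
  refine ⟨_, _, _, realizes_of_injective (fun i h => .mk ℂ _ (hne i h)) ?_ fun x y z => ?_⟩
  · rintro ⟨i, h⟩ ⟨j, h'⟩ hij
    have hfactor := hσ.factor_eq_zero_of_mk_frobeniusVector_eq s a (u i h) (u j h') 0 1
      (hua i h 0) (hua i h 1) (hua j h' 0) (hua j h' 1) (hne i h) (hne j h') hij
    have hdiff : σ (u i h - u j h') = 0 := by simpa [hs, hsuu, ha 0 1 (by decide)] using hfactor
    exact Prod.ext_iff.2 (huu i j h h' hdiff)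
  · let w : Fin 3 → H := ![x, y, z]
    have hdet := hσ.det_frobeniusVector_eq_zero_iff s a (fun i => u i (w i)) hs
      (fun i => hua i (w i)) (huas 1 y 1)
      (fun i j hij h0 => hij.ne (huu i j (w i) (w j) h0).1) ha
    have hcollin := collin_mk_iff_det_eq_zero _ fun i => hne i (w i)
    rw [Fin.sum_univ_three] at hdet
    exact hcollin.trans (hdet.trans (hsum x y z))

theorem ThreeTermRelation.exists_realizes_of_injective {G : Type*} [AddCommGroup G] {σ : G → ℂ}
    (hσ : ThreeTermRelation σ) {Z : AddSubgroup G} (hZ : ∀ g, σ g = 0 ↔ g ∈ Z) {H : Type}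
    [AddCommGroup H] (φ : H × ℤ →+ G ⧸ Z) (hφ : Function.Injective φ) :
    ∃ p₁ p₂ p₃ : H → P2, Realizes p₁ p₂ p₃ := by
  let u (h : H) (n : ℤ) : G := (φ (h, n)).out
  have mk_u (h : H) (n : ℤ) : (u h n : G ⧸ Z) = φ (h, n) := QuotientAddGroup.out_eq' _
  have zero_iff {g : G} (h : H) (n : ℤ) (hg : (g : G ⧸ Z) = φ (h, n)) :
      σ g = 0 ↔ h = 0 ∧ n = 0 := by
    rw [hZ, ← QuotientAddGroup.eq_zero_iff, hg, map_eq_zero_iff φ hφ, Prod.mk_eq_zero]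
  have ne_zero {g : G} (h : H) (n : ℤ) (hg : (g : G ⧸ Z) = φ (h, n)) (hn : n ≠ 0) : σ g ≠ 0 :=
    fun h0 => hn ((zero_iff h n hg).1 h0).2
  -- With poles at `0, 1, 2` and shift `-10`, coordinates `3, 4, 6` for the three classes make
  -- `-10 + (3 + 4 + 6) - (0 + 1 + 2)` vanish and keep every other argument of `σ` off the zeros.
  let e : Fin 3 → ℤ := ![0, 1, 2]
  let t : Fin 3 → ℤ := ![3, 4, 6]
  have t_injective : Function.Injective t := by decide
  refine hσ.exists_realizes_of_sum_eq_zero_iff (u 0 (-10)) (fun k => u 0 (e k))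
    (fun i h => u h (t i))
    (ne_zero 0 (-10) (mk_u _ _) (by decide))
    (fun i j hij => ne_zero 0 (e j - e i) (by simp [mk_u, ← map_sub]) (by decide +revert))
    (fun i h k => ne_zero h (t i - e k) (by simp [mk_u, ← map_sub]) (by decide +revert))
    (fun i h k => ne_zero h (t i - e k + -10) (by simp [mk_u, ← map_sub, ← map_add])
      (by decide +revert))
    (fun i j h h' hij => ?_)
    (fun i j h h' => ne_zero (h + h') (-10 + t i + t j - e 0 - e 1)
      (by simp [mk_u, ← map_sub, ← map_add]) (by decide +revert))
    (fun x y z => ?_)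
  · obtain ⟨hh, ht⟩ := (zero_iff (h - h') (t i - t j) (by simp [mk_u, ← map_sub])).1 hij
    exact ⟨t_injective (sub_eq_zero.1 ht), sub_eq_zero.1 hh⟩
  · rw [zero_iff (x + y + z) 0, and_iff_left rfl]
    simp [mk_u, Fin.sum_univ_three, ← map_sub, ← map_add, e, t]

theorem exists_basis_span_int_eq {E : Type*} [NormedAddCommGroup E] [NormedSpace ℝ E]
    [FiniteDimensional ℝ E] {n : ℕ} (hn : Module.finrank ℝ E = n) (L : Submodule ℤ E)
    [DiscreteTopology L] [IsZLattice ℝ L] :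
    ∃ b : Module.Basis (Fin n) ℝ E, Submodule.span ℤ (Set.range b) = L := by
  have := ZLattice.module_free ℝ L
  have := ZLattice.module_finite ℝ L
  let b := Module.finBasisOfFinrankEq ℤ L ((ZLattice.rank ℝ L).trans hn)
  exact ⟨b.ofZLatticeBasis ℝ, b.ofZLatticeBasis_span ℝ⟩

theorem exists_injective_addCircle_hom {ι E : Type*} [Finite ι] [AddCommGroup E]
    [Module ℝ E] (b : Module.Basis ι ℝ E) :
    ∃ f : (ι → UnitAddCircle) →+ E ⧸ (Submodule.span ℤ (Set.range b)).toAddSubgroup,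
      Function.Injective f := by
  have := Fintype.ofFinite ι
  set L := (Submodule.span ℤ (Set.range b)).toAddSubgroup
  let f (i : ι) : UnitAddCircle →+ E ⧸ L :=
    QuotientAddGroup.map _ L ((LinearMap.toSpanSingleton ℝ E (b i)).toAddMonoidHom) <| by
      rw [AddSubgroup.zmultiples_le]
      simpa [L] using Submodule.subset_span (Set.mem_range_self i)
  refine ⟨∑ i, (f i).comp (Pi.evalAddMonoidHom _ i), ?_⟩
  refine (injective_iff_map_eq_zero _).2 fun c hc => ?_
  obtain ⟨r, rfl⟩ : ∃ r : ι → ℝ, (fun i => (r i : UnitAddCircle)) = c :=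
    ⟨fun i => (c i).out, funext fun i => QuotientAddGroup.out_eq' _⟩
  have hmem : ∑ i, r i • b i ∈ L := by
    rw [← QuotientAddGroup.eq_zero_iff, ← hc]
    simp [f]
  ext i
  obtain ⟨n, hn⟩ := (b.mem_span_iff_repr_mem ℤ _).1 hmem i
  have hr : (n : ℝ) = r i := hn.trans (congrFun (b.repr_sum_self r) i)
  exact (AddCircle.coe_eq_zero_iff 1).2 ⟨n, by simpa using hr⟩

theorem exists_zsmul_notMem {A : Type*} [AddCommGroup A] [IsAddTorsionFree A] [Uncountable A]
    {S : Set A} (hS : S.Countable) : ∃ z, ∀ m : ℤ, m ≠ 0 → m • z ∉ S := by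
  have hcount : (⋃ m : {m : ℤ // m ≠ 0}, (fun z : A => (m : ℤ) • z) ⁻¹' S).Countable :=
    Set.countable_iUnion fun m => hS.preimage (zsmul_right_injective m.2)
  obtain ⟨z, hz⟩ : ∃ z, z ∉ ⋃ m : {m : ℤ // m ≠ 0}, (fun z : A => (m : ℤ) • z) ⁻¹' S := by
    by_contra! hcover
    exact Set.not_countable_univ (hcount.mono fun z _ => hcover z)
  exact ⟨z, fun m hm hmz => hz (Set.mem_iUnion.2 ⟨⟨m, hm⟩, hmz⟩)⟩

theorem exists_injective_prod_int {A H : Type*} [AddCommGroup A] [IsAddTorsionFree A]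
    [Uncountable A] [AddCommGroup H] [Countable H] (L : AddSubgroup A) [Countable L]
    (φ : H →+ A ⧸ L) (hφ : Function.Injective φ) :
    ∃ ψ : H × ℤ →+ A ⧸ L, Function.Injective ψ := by
  have hS : ((↑) ⁻¹' Set.range φ : Set A).Countable := by
    refine (Set.countable_range fun p : H × L => (φ p.1).out + p.2).mono ?_
    rintro z ⟨h, hz⟩
    exact ⟨(h, ⟨-(φ h).out + z, QuotientAddGroup.eq.1 ((QuotientAddGroup.out_eq' _).trans hz)⟩),
      add_neg_cancel_left _ _⟩
  obtain ⟨z, hz⟩ := exists_zsmul_notMem hS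
  refine ⟨φ.coprod (zmultiplesHom _ (z : A ⧸ L)), (injective_iff_map_eq_zero _).2 ?_⟩
  rintro ⟨h, m⟩ hhm
  have hm : m = 0 := by
    by_contra hm
    exact hz m hm ⟨-h, by simpa [neg_eq_iff_add_eq_zero] using hhm⟩
  have hh : φ h = 0 := by simpa [hm] using hhm
  rw [Prod.mk_eq_zero]
  exact ⟨(map_eq_zero_iff φ hφ).1 hh, hm⟩

theorem isDiscrete_setOf_eq_zero {σ : ℂ → ℂ} (hσ : Differentiable ℂ σ) (hne : ∃ z, σ z ≠ 0) :
    IsDiscrete {z | σ z = 0} := by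
  obtain ⟨z, hz⟩ := hne
  have hanalytic := hσ.differentiableOn.analyticOnNhd isOpen_univ
  have hcodiscrete := hanalytic.preimage_zero_mem_codiscrete hz
  simpa [Set.preimage, Set.compl_ofPred] using (mem_codiscrete'.1 hcodiscrete).2

theorem ThreeTermRelation.exists_basis_zeros_eq {σ : ℂ → ℂ} (hσ : ThreeTermRelation σ)
    (hdiff : Differentiable ℂ σ) (hne : ∃ z, σ z ≠ 0) {ω : Fin 2 → ℂ}
    (hω : LinearIndependent ℝ ω) (hzero : ∀ i, σ (ω i) = 0) :
    ∃ b : Module.Basis (Fin 2) ℝ ℂ, ∀ z, σ z = 0 ↔ z ∈ Submodule.span ℤ (Set.range b) := by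
  let L : Submodule ℤ ℂ :=
    (hσ.zeros (exists_ne_zero_and_add_ne_zero hdiff hne)).toIntSubmodule
  have mem_L (z : ℂ) : z ∈ L ↔ σ z = 0 := Iff.rfl
  have : DiscreteTopology L := (isDiscrete_setOf_eq_zero hdiff hne).to_subtype
  have : IsZLattice ℝ L := ⟨by
    rw [← top_le_iff, ← hω.span_eq_top_of_card_eq_finrank' (by simp)]
    exact Submodule.span_mono (Set.range_subset_iff.2 hzero)⟩
  obtain ⟨b, hb⟩ := exists_basis_span_int_eq Complex.finrank_real_complex L
  exact ⟨b, fun z => by rw [hb, mem_L]⟩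

theorem ThreeTermRelation.exists_realizes_of_torus_embedding {σ : ℂ → ℂ}
    (hσ : ThreeTermRelation σ) (b : Module.Basis (Fin 2) ℝ ℂ)
    (hb : ∀ z, σ z = 0 ↔ z ∈ Submodule.span ℤ (Set.range b)) {H : Type} [AddCommGroup H]
    [Countable H] (φ : H →+ UnitAddCircle × UnitAddCircle) (hφ : Function.Injective φ) :
    ∃ p₁ p₂ p₃ : H → P2, Realizes p₁ p₂ p₃ := by
  obtain ⟨f, hf⟩ := exists_injective_addCircle_hom b
  let L := (Submodule.span ℤ (Set.range b)).toAddSubgroup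
  have : Countable L := inferInstanceAs (Countable (Submodule.span ℤ (Set.range b)))
  have : Uncountable ℂ := Complex.ofReal_injective.uncountable
  let e := (LinearEquiv.finTwoArrow ℤ UnitAddCircle).symm.toAddEquiv
  obtain ⟨ψ, hψ⟩ := exists_injective_prod_int L (f.comp (e.toAddMonoidHom.comp φ))
    (hf.comp (e.injective.comp hφ))
  exact hσ.exists_realizes_of_injective hb ψ hψ

section Theta

open Complex Real

/-- Pairs of integers of the same parity and pairs of opposite parity, each indexed by half-sums
and half-differences. -/
def sumDiffEquiv : (ℤ × ℤ) ⊕ (ℤ × ℤ) ≃ ℤ × ℤ where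
  toFun := Sum.elim (fun p => (p.1 + p.2, p.1 - p.2)) fun p => (p.1 + p.2 + 1, p.1 - p.2)
  invFun p := if (p.1 + p.2) % 2 = 0 then .inl ((p.1 + p.2) / 2, (p.1 - p.2) / 2)
    else .inr ((p.1 + p.2 - 1) / 2, (p.1 - p.2 - 1) / 2)
  left_inv := by
    rintro (⟨k, l⟩ | ⟨k, l⟩) <;> grind
  right_inv := by
    rintro ⟨m, n⟩
    grind

theorem jacobiTheta₂_term_add_mul_term_sub (k l : ℤ) (x y τ : ℂ) :
    jacobiTheta₂_term (k + l) x τ * jacobiTheta₂_term (k - l) y τ =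
      jacobiTheta₂_term k (x + y) (2 * τ) * jacobiTheta₂_term l (x - y) (2 * τ) := by
  simp only [jacobiTheta₂_term, ← Complex.exp_add]
  push_cast
  ring_nf

theorem jacobiTheta₂_term_add_add_one_mul_term_sub (k l : ℤ) (x y τ : ℂ) :
    jacobiTheta₂_term (k + l + 1) x τ * jacobiTheta₂_term (k - l) y τ =
      cexp (π * I * (τ + 2 * x)) * (jacobiTheta₂_term k (x + y + τ) (2 * τ) *
        jacobiTheta₂_term l (x - y + τ) (2 * τ)) := by
  simp only [jacobiTheta₂_term, ← Complex.exp_add]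
  push_cast
  ring_nf

theorem jacobiTheta₂_mul_jacobiTheta₂ (x y τ : ℂ) :
    jacobiTheta₂ x τ * jacobiTheta₂ y τ =
      jacobiTheta₂ (x + y) (2 * τ) * jacobiTheta₂ (x - y) (2 * τ) +
        cexp (π * I * (τ + 2 * x)) * jacobiTheta₂ (x + y + τ) (2 * τ) *
          jacobiTheta₂ (x - y + τ) (2 * τ) := by
  have im_two_mul : (2 * τ).im = 2 * τ.im := by simp
  rcases le_or_gt τ.im 0 with hτ | hτ
  · have hτ₂ : (2 * τ).im ≤ 0 := by linarith
    simp [jacobiTheta₂_undef _ hτ, jacobiTheta₂_undef _ hτ₂]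
  have hτ₂ : 0 < (2 * τ).im := by linarith
  have summable_norm (z : ℂ) {τ' : ℂ} (h : 0 < τ'.im) :
      Summable fun n => ‖jacobiTheta₂_term n z τ'‖ :=
    ((summable_jacobiTheta₂_term_iff z τ').2 h).norm
  have hsum := summable_mul_of_summable_norm (summable_norm x hτ) (summable_norm y hτ)
  have hsum' := sumDiffEquiv.summable_iff.2 hsum
  calc jacobiTheta₂ x τ * jacobiTheta₂ y τ
      = ∑' p : ℤ × ℤ, jacobiTheta₂_term p.1 x τ * jacobiTheta₂_term p.2 y τ :=
        tsum_mul_tsum_of_summable_norm (summable_norm x hτ) (summable_norm y hτ)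
    _ = (∑' p : ℤ × ℤ, jacobiTheta₂_term (p.1 + p.2) x τ * jacobiTheta₂_term (p.1 - p.2) y τ) +
        ∑' p : ℤ × ℤ,
          jacobiTheta₂_term (p.1 + p.2 + 1) x τ * jacobiTheta₂_term (p.1 - p.2) y τ := by
        rw [← sumDiffEquiv.tsum_eq]
        exact Summable.tsum_sum (hsum'.comp_injective Sum.inl_injective)
          (hsum'.comp_injective Sum.inr_injective)
    _ = _ := by
        simp only [jacobiTheta₂_term_add_mul_term_sub, jacobiTheta₂_term_add_add_one_mul_term_sub,
          tsum_mul_left]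
        rw [← tsum_mul_tsum_of_summable_norm (summable_norm _ hτ₂) (summable_norm _ hτ₂),
          ← tsum_mul_tsum_of_summable_norm (summable_norm _ hτ₂) (summable_norm _ hτ₂), ← mul_assoc]
        rfl

/-- The odd Jacobi theta function `ϑ₁(z, τ)`, up to a constant factor. -/
noncomputable def oddTheta (τ z : ℂ) : ℂ :=
  cexp (π * I * z) * jacobiTheta₂ (z + (1 + τ) / 2) τ

theorem oddTheta_add_mul_oddTheta_sub (τ u v : ℂ) :
    oddTheta τ (u + v) * oddTheta τ (u - v) =
      cexp (2 * π * I * u) * jacobiTheta₂ (2 * u + τ) (2 * τ) * jacobiTheta₂ (2 * v) (2 * τ) -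
        jacobiTheta₂ (2 * u) (2 * τ) *
          (cexp (2 * π * I * v) * jacobiTheta₂ (2 * v + τ) (2 * τ)) := by
  unfold oddTheta
  have h := jacobiTheta₂_mul_jacobiTheta₂ (u + v + (1 + τ) / 2) (u - v + (1 + τ) / 2) τ
  have hsum : u + v + (1 + τ) / 2 + (u - v + (1 + τ) / 2) = 2 * u + τ + 1 := by ring
  have hdiff : u + v + (1 + τ) / 2 - (u - v + (1 + τ) / 2) = 2 * v := by ring
  have hshift : 2 * u + τ + 1 + τ = 2 * u + 2 * τ + 1 := by ring
  rw [hsum, hdiff, hshift, jacobiTheta₂_add_left, jacobiTheta₂_add_left,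
    jacobiTheta₂_add_left'] at h
  have hprefactor : cexp (π * I * (u + v)) * cexp (π * I * (u - v)) = cexp (2 * π * I * u) := by
    rw [← Complex.exp_add]
    ring_nf
  have hfactor : cexp (2 * π * I * u) * (cexp (π * I * (τ + 2 * (u + v + (1 + τ) / 2))) *
      cexp (-π * I * (2 * τ + 2 * (2 * u)))) = -cexp (2 * π * I * v) := by
    rw [← Complex.exp_add, ← Complex.exp_add, ← Complex.exp_add_pi_mul_I]
    ring_nf
  rw [mul_mul_mul_comm, h, hprefactor]
  linear_combination (jacobiTheta₂ (2 * u) (2 * τ) * jacobiTheta₂ (2 * v + τ) (2 * τ)) * hfactor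

theorem oddTheta_add_one (τ z : ℂ) : oddTheta τ (z + 1) = -oddTheta τ z := by
  unfold oddTheta
  rw [add_right_comm z 1, jacobiTheta₂_add_left, mul_add, Complex.exp_add, mul_one,
    Complex.exp_pi_mul_I]
  ring

theorem oddTheta_add_modulus (τ z : ℂ) :
    oddTheta τ (z + τ) = -cexp (-π * I * (τ + 2 * z)) * oddTheta τ z := by
  have hfactor : cexp (π * I * (z + τ)) * cexp (-π * I * (τ + 2 * (z + (1 + τ) / 2))) =
      -cexp (-π * I * (τ + 2 * z)) * cexp (π * I * z) := by
    rw [neg_mul (cexp _), ← Complex.exp_add, ← Complex.exp_add, ← Complex.exp_sub_pi_mul_I]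
    ring_nf
  rw [oddTheta, oddTheta, add_right_comm z τ, jacobiTheta₂_add_left', ← mul_assoc, hfactor,
    mul_assoc]

theorem threeTermRelation_oddTheta (τ : ℂ) : ThreeTermRelation (oddTheta τ) :=
  threeTermRelation_of_factorization (oddTheta_add_mul_oddTheta_sub τ)

theorem differentiable_oddTheta {τ : ℂ} (hτ : 0 < τ.im) : Differentiable ℂ (oddTheta τ) := by
  intro z
  have htheta : DifferentiableAt ℂ (jacobiTheta₂ · τ) (z + (1 + τ) / 2) :=
    differentiableAt_jacobiTheta₂_fst _ hτ
  have hcomp : DifferentiableAt ℂ (fun z => jacobiTheta₂ (z + (1 + τ) / 2) τ) z :=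
    htheta.comp z (differentiableAt_id.add_const _)
  unfold oddTheta
  fun_prop

theorem jacobiTheta_ne_zero {τ : ℂ} (hτ : 1 ≤ τ.im) : jacobiTheta τ ≠ 0 := by
  intro hzero
  have hexp : rexp (-π * τ.im) < 1 / 4 := by
    have hlarge : 4 < rexp (π * τ.im) := by nlinarith [pi_gt_three, add_one_le_exp (π * τ.im)]
    rw [neg_mul, Real.exp_neg, ← one_div]
    exact one_div_lt_one_div_of_lt (by norm_num) hlarge
  have hnorm := norm_jacobiTheta_sub_one_le (zero_lt_one.trans_le hτ)
  rw [hzero, zero_sub, norm_neg, norm_one, div_mul_eq_mul_div, le_div_iff₀ (by linarith)] at hnorm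
  linarith

theorem exists_basis_oddTheta_eq_zero_iff {τ : ℂ} (hτ : 1 ≤ τ.im) :
    ∃ b : Module.Basis (Fin 2) ℝ ℂ,
      ∀ z, oddTheta τ z = 0 ↔ z ∈ Submodule.span ℤ (Set.range b) := by
  have hτ₀ : 0 < τ.im := zero_lt_one.trans_le hτ
  have hne : oddTheta τ (-((1 + τ) / 2)) ≠ 0 := by
    simpa [oddTheta, jacobiTheta_eq_jacobiTheta₂] using jacobiTheta_ne_zero hτ
  have hdiff := differentiable_oddTheta hτ₀
  have hzero : oddTheta τ 0 = 0 := (threeTermRelation_oddTheta τ).apply_zero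
    (exists_ne_zero_and_add_ne_zero hdiff ⟨_, hne⟩)
  have hindep : LinearIndependent ℝ ![1, τ] := by
    rw [LinearIndependent.pair_iff]
    intro s t hst
    have ht : t = 0 := by simpa [hτ₀.ne'] using congrArg Complex.im hst
    simpa [ht] using hst
  refine (threeTermRelation_oddTheta τ).exists_basis_zeros_eq hdiff ⟨_, hne⟩ hindep fun i => ?_
  fin_cases i
  · simpa [hzero] using oddTheta_add_one τ 0
  · simpa [hzero] using oddTheta_add_modulus τ 0

end Theta

theorem realization_of_subgroups_of_two_torus_general {H : Type} [AddCommGroup H] [Countable H]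
    (φ : H →+ UnitAddCircle × UnitAddCircle) (hφ : Function.Injective φ) :
    ∃ p₁ p₂ p₃ : H → P2, Realizes p₁ p₂ p₃ := by
  obtain ⟨b, hb⟩ := exists_basis_oddTheta_eq_zero_iff (τ := Complex.I) (by simp)
  exact (threeTermRelation_oddTheta Complex.I).exists_realizes_of_torus_embedding b hb φ hφ

/-- Every finite subgroup of a two-dimensional complex torus, i.e. every
group ℤ/aℤ × ℤ/bℤ with a, b ≥ 1, can be realized by a 3-net in ℙ²(ℂ). -/
theorem realization_of_subgroups_of_two_torus (a b : ℕ) (ha : 0 < a) (hb : 0 < b) :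
    ∃ p₁ p₂ p₃ : (ZMod a × ZMod b) → P2, Realizes p₁ p₂ p₃ := by
  have : NeZero a := ⟨ha.ne'⟩
  have : NeZero b := ⟨hb.ne'⟩
  exact realization_of_subgroups_of_two_torus_general
    (ZMod.toAddCircle.prodMap ZMod.toAddCircle)
    ((ZMod.toAddCircle_injective a).prodMap (ZMod.toAddCircle_injective b))
end
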